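/- arXiv:1803.02213 — 11 statements merged into one kernel-verified Lean document; each statement's English description precedes it below -/
import Mathlib

section
/- Let h be a Hermitian complex matrix on a bipartite system, h : Matrix (n × m) (n × m) ℂ with hᴴ = h, admitting two decompositions h = ∑_{i ∈ s} aᵢ ⊗ₖ bᵢ = ∑_{j ∈ t} cⱼ ⊗ₖ dⱼ, where aᵢ, cⱼ : Matrix n n ℂ, bᵢ, dⱼ : Matrix m m ℂ, and each of the families (bᵢ)_{i ∈ s} and (dⱼ)_{j ∈ t} is linearly independent over ℂ. Then the star subalgebras of Matrix n n ℂ generated by the two families of first factors coincide: StarSubalgebra.adjoin ℂ {aᵢ | i ∈ s} = StarSubalgebra.adjoin ℂ {cⱼ | j ∈ t}. Hence the induced algebra of h on the first tensor factor is independent of the chosen decomposition. -/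
open Matrix Kronecker

/-!
Pick a linear functional `f` on the second matrix factor that is dual to `b i`, i.e. `f (b i) = 1`
and `f (b k) = 0` for `k ≠ i`; it exists because the family `b` is linearly independent. The slice
map `id ⊗ f` sends `∑ a k ⊗ₖ b k` to `a i` and `∑ c j ⊗ₖ d j` to `∑ f (d j) • c j`, so every `a i`
is a linear combination of the `c j` (`first_factor_mem_span`). By symmetry the two families have
the same linear span, hence generate the same star subalgebra.
-/

/-- Slicing with a linear functional `f` on the second factor: the value of `id ⊗ f` does not
depend on how an operator is written as a sum of Kronecker products. -/
lemma slice_eq {n m ι κ : Type*} {s : Finset ι} {t : Finset κ}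
    {a : ι → Matrix n n ℂ} {b : ι → Matrix m m ℂ}
    {c : κ → Matrix n n ℂ} {d : κ → Matrix m m ℂ}
    (h : ∑ i ∈ s, a i ⊗ₖ b i = ∑ j ∈ t, c j ⊗ₖ d j) (f : Matrix m m ℂ →ₗ[ℂ] ℂ) :
    ∑ i ∈ s, f (b i) • a i = ∑ j ∈ t, f (d j) • c j := by
  ext p q
  -- `f` is applied to the `(p, q)` block of the operator.
  have block : ∑ i ∈ s, a i p q • b i = ∑ j ∈ t, c j p q • d j := by
    ext x y
    have := congrFun (congrFun h (p, x)) (q, y)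
    simpa [Matrix.sum_apply] using this
  have := congrArg f block
  simpa [Matrix.sum_apply, mul_comm] using this

lemma first_factor_mem_span {n m ι κ : Type*} {s : Finset ι} {t : Finset κ}
    {a : ι → Matrix n n ℂ} {b : ι → Matrix m m ℂ}
    {c : κ → Matrix n n ℂ} {d : κ → Matrix m m ℂ}
    (h : ∑ i ∈ s, a i ⊗ₖ b i = ∑ j ∈ t, c j ⊗ₖ d j)
    (hb : LinearIndependent ℂ (fun i : s => b i)) {i : ι} (hi : i ∈ s) :
    a i ∈ Submodule.span ℂ (c '' ↑t) := by
  classical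
  -- `g` is a left inverse of `Finsupp.linearCombination`, so its `i`-th coordinate is dual to `b i`.
  obtain ⟨g, hg⟩ := LinearMap.exists_leftInverse_of_injective _ (LinearMap.ker_eq_bot.2 hb)
  have hgb (k : s) : g (b k) = Finsupp.single k 1 := by
    simpa using LinearMap.congr_fun hg (Finsupp.single k 1)
  have key := slice_eq h (Finsupp.lapply (⟨i, hi⟩ : s) ∘ₗ g)
  rw [Finset.sum_eq_single_of_mem i hi] at key
  · have h1 := hgb ⟨i, hi⟩
    simp only at h1
    simp only [LinearMap.comp_apply, h1, Finsupp.lapply_apply, Finsupp.single_eq_same,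
      one_smul] at key
    rw [key]
    exact Submodule.sum_mem _ fun j hj =>
      Submodule.smul_mem _ _ (Submodule.subset_span (Set.mem_image_of_mem c hj))
  · intro k hk hki
    have h1 := hgb ⟨k, hk⟩
    simp only at h1
    simp [h1, hki]

lemma adjoin_first_factors_le {n m ι κ : Type*} [Fintype n] [DecidableEq n]
    {s : Finset ι} {t : Finset κ}
    {a : ι → Matrix n n ℂ} {b : ι → Matrix m m ℂ}
    {c : κ → Matrix n n ℂ} {d : κ → Matrix m m ℂ}
    (h : ∑ i ∈ s, a i ⊗ₖ b i = ∑ j ∈ t, c j ⊗ₖ d j)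
    (hb : LinearIndependent ℂ (fun i : s => b i)) :
    StarAlgebra.adjoin ℂ (a '' ↑s) ≤ StarAlgebra.adjoin ℂ (c '' ↑t) := by
  refine StarAlgebra.adjoin_le ?_
  rintro _ ⟨i, hi, rfl⟩
  have hle : Submodule.span ℂ (c '' ↑t) ≤
      Subalgebra.toSubmodule (StarAlgebra.adjoin ℂ (c '' (t : Set κ))).toSubalgebra :=
    Submodule.span_le.2 (StarAlgebra.subset_adjoin ℂ _)
  exact hle (first_factor_mem_span h hb hi)

/-- The induced algebra of a Hermitian bipartite operator on the
first tensor factor is independent of the chosen decomposition: if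
`h = ∑_{i ∈ s} aᵢ ⊗ₖ bᵢ = ∑_{j ∈ t} cⱼ ⊗ₖ dⱼ` with `(bᵢ)` and `(dⱼ)` linearly
independent over `ℂ`, then the star subalgebras generated by the `aᵢ` and by
the `cⱼ` coincide. -/
theorem induced_algebra_well_defined
    {n m : Type*} [Fintype n] [Fintype m] [DecidableEq n] [DecidableEq m]
    [Nonempty n] [Nonempty m]
    {ι κ : Type*} (s : Finset ι) (t : Finset κ)
    (a : ι → Matrix n n ℂ) (b : ι → Matrix m m ℂ)
    (c : κ → Matrix n n ℂ) (d : κ → Matrix m m ℂ)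
    (h : Matrix (n × m) (n × m) ℂ)
    (hherm : hᴴ = h)
    (hdec₁ : h = ∑ i ∈ s, a i ⊗ₖ b i)
    (hdec₂ : h = ∑ j ∈ t, c j ⊗ₖ d j)
    (hb : LinearIndependent ℂ (fun i : s => b i))
    (hd : LinearIndependent ℂ (fun j : t => d j)) :
    StarAlgebra.adjoin ℂ (a '' ↑s) = StarAlgebra.adjoin ℂ (c '' ↑t) := by
  have hE := hdec₁.symm.trans hdec₂
  exact le_antisymm (adjoin_first_factors_le hE hb) (adjoin_first_factors_le hE.symm hd)
end

section
/- Let h : Matrix (n₁ × n₂ × n₃) (n₁ × n₂ × n₃) ℂ be an operator on a tripartite system with three decompositions: (i) h ((i,j,k),(i',j',k')) = ∑_α g_α ((i,j),(i',j')) · c_α (k,k') with g_α : Matrix (n₁ × n₂) (n₁ × n₂) ℂ, c_α : Matrix n₃ n₃ ℂ and the family (c_α) linearly independent over ℂ; (ii) h ((i,j,k),(i',j',k')) = ∑_β a_β (i,i') · e_β ((j,k),(j',k')) with a_β : Matrix n₁ n₁ ℂ and (e_β) linearly independent; (iii) h ((i,j,k),(i',j',k')) = ∑_γ b_γ (j,j')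 · f_γ ((i,k),(i',k')) with b_γ : Matrix n₂ n₂ ℂ and (f_γ) linearly independent. Set A₁₂ := StarSubalgebra.adjoin ℂ {g_α}, A₁ := StarSubalgebra.adjoin ℂ {a_β}, A₂ := StarSubalgebra.adjoin ℂ {b_γ}. Then every element of A₁₂ lies in the ℂ-linear span of {x ⊗ₖ y | x ∈ A₁, y ∈ A₂} inside Matrix (n₁ × n₂) (n₁ × n₂) ℂ; that is, the induced algebra of h on the pair of factors (1,2) is contained in the tensor product of the induced algebras of h on factor 1 and on factor 2. -/
/-!
Write `A₁`, `A₂` for the induced algebras on the two single factors. Since the family `c` is linearly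
independent, there are functionals `φ` on `Matrix n₃ n₃ ℂ` dual to it, and applying `φ` to the third
factor of `h` recovers each `g α` as a linear combination of the blocks `h (·, ·, k) (·, ·, k')`
(`exists_coeff_of_linearIndependent`). The decompositions along factors `1` and `2` show that every
slice of `g α` along factor `1` lies in `A₁` and every slice along factor `2` lies in `A₂`.
A matrix with these two properties lies in the span of `A₁ ⊗ₖ A₂`
(`mem_span_kronecker_of_slices`). Finally, that span is closed under products and
adjoints and contains the scalars, so it contains the star algebra generated by the `g α`.
-/

open Matrix Kronecker

lemma map_eq_sum_single {n E : Type*} [Fintype n] [DecidableEq n] [AddCommGroup E] [Module ℂ E]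
    (L : Matrix n n ℂ →ₗ[ℂ] E) (M : Matrix n n ℂ) :
    L M = ∑ k, ∑ k', M k k' • L (Matrix.single k k' 1) := by
  conv_lhs => rw [Matrix.matrix_eq_sum_single M]
  simp only [map_sum, ← map_smul, Matrix.smul_single, smul_eq_mul, mul_one]

/-- The coordinates with respect to a linearly independent family of matrices are given by
functionals, that is, by linear combinations of the entries. -/
lemma exists_coeff_of_linearIndependent {n ι : Type*} [Fintype n] [DecidableEq n] [Fintype ι]
    {c : ι → Matrix n n ℂ} (hc : LinearIndependent ℂ c) (α : ι) :
    ∃ w : n → n → ℂ, ∀ x : ι → ℂ,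
      x α = ∑ k, ∑ k', w k k' * ∑ α', x α' * c α' k k' := by
  classical
  obtain ⟨L, hL⟩ := LinearMap.exists_leftInverse_of_injective
    (Fintype.linearCombination ℂ c)
    (LinearMap.ker_eq_bot.2 (hc.fintypeLinearCombination_injective))
  refine ⟨fun k k' => L (Matrix.single k k' 1) α, fun x => ?_⟩
  have h1 : L (∑ α', x α' • c α') = x := by
    simpa [Fintype.linearCombination_apply] using LinearMap.congr_fun hL x
  conv_lhs => rw [← h1]
  rw [map_eq_sum_single L]
  simp [Matrix.sum_apply, mul_comm]

/-- A matrix on a product whose slices along the first factor lie in `V` and whose slices along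
the second factor lie in `W` lies in the span of `V ⊗ₖ W`. With `ρ` a linear projection onto `W`,
it equals the sum over `j, j'` of its `(j, j')` slice tensored with `ρ (single j j' 1)`. -/
lemma mem_span_kronecker_of_slices {m n : Type*} [Fintype n] [DecidableEq n]
    (V : Submodule ℂ (Matrix m m ℂ)) (W : Submodule ℂ (Matrix n n ℂ))
    (x : Matrix (m × n) (m × n) ℂ)
    (hV : ∀ j j', (Matrix.of fun i i' => x (i, j) (i', j')) ∈ V)
    (hW : ∀ i i', (Matrix.of fun j j' => x (i, j) (i', j')) ∈ W) :
    x ∈ Submodule.span ℂ {y : Matrix (m × n) (m × n) ℂ | ∃ p ∈ V, ∃ q ∈ W, y = p ⊗ₖ q} := by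
  obtain ⟨ρ, hρ⟩ := LinearMap.exists_leftInverse_of_injective W.subtype (Submodule.ker_subtype W)
  have hfix : ∀ M ∈ W, (ρ M : Matrix n n ℂ) = M := fun M hM =>
    congrArg Subtype.val (LinearMap.congr_fun hρ ⟨M, hM⟩)
  have key : x = ∑ j, ∑ j', (Matrix.of fun i i' => x (i, j) (i', j')) ⊗ₖ
      (ρ (Matrix.single j j' 1) : Matrix n n ℂ) := by
    ext ⟨i, l⟩ ⟨i', l'⟩
    have h1 := hfix _ (hW i i')
    rw [map_eq_sum_single ρ] at h1
    have h3 := congrFun (congrFun h1 l) l'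
    simpa [Matrix.sum_apply] using h3.symm
  rw [key]
  exact Submodule.sum_mem _ fun j _ => Submodule.sum_mem _ fun j' _ =>
    Submodule.subset_span ⟨_, hV j j', _, (ρ _).2, rfl⟩

/-- For a tripartite operator `h`, the induced algebra on the pair
of factors `(1,2)` is contained in the (linear span of the) tensor product of the
induced algebras on factor `1` and on factor `2`. -/
theorem induced_algebra_pair_subset_tensor
    {n₁ n₂ n₃ : Type*} [Fintype n₁] [Fintype n₂] [Fintype n₃]
    [DecidableEq n₁] [DecidableEq n₂] [DecidableEq n₃]
    [Nonempty n₁] [Nonempty n₂] [Nonempty n₃]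
    {ια ιβ ιγ : Type*} [Fintype ια] [Fintype ιβ] [Fintype ιγ]
    (h : Matrix (n₁ × n₂ × n₃) (n₁ × n₂ × n₃) ℂ)
    (g : ια → Matrix (n₁ × n₂) (n₁ × n₂) ℂ) (c : ια → Matrix n₃ n₃ ℂ)
    (a : ιβ → Matrix n₁ n₁ ℂ) (e : ιβ → Matrix (n₂ × n₃) (n₂ × n₃) ℂ)
    (b : ιγ → Matrix n₂ n₂ ℂ) (f : ιγ → Matrix (n₁ × n₃) (n₁ × n₃) ℂ)
    (hdec₁ : ∀ (i i' : n₁) (j j' : n₂) (k k' : n₃),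
      h (i, j, k) (i', j', k') = ∑ α, g α (i, j) (i', j') * c α k k')
    (hc : LinearIndependent ℂ c)
    (hdec₂ : ∀ (i i' : n₁) (j j' : n₂) (k k' : n₃),
      h (i, j, k) (i', j', k') = ∑ β, a β i i' * e β (j, k) (j', k'))
    (he : LinearIndependent ℂ e)
    (hdec₃ : ∀ (i i' : n₁) (j j' : n₂) (k k' : n₃),
      h (i, j, k) (i', j', k') = ∑ γ, b γ j j' * f γ (i, k) (i', k'))
    (hf : LinearIndependent ℂ f) :
    ∀ x ∈ StarAlgebra.adjoin ℂ (Set.range g),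
      x ∈ Submodule.span ℂ {m : Matrix (n₁ × n₂) (n₁ × n₂) ℂ |
        ∃ p ∈ StarAlgebra.adjoin ℂ (Set.range a),
        ∃ q ∈ StarAlgebra.adjoin ℂ (Set.range b), m = p ⊗ₖ q} := by
  classical
  intro x hx
  induction hx using StarAlgebra.adjoin_induction with
  | mem y hy =>
    obtain ⟨α, rfl⟩ := hy
    obtain ⟨w, hw⟩ := exists_coeff_of_linearIndependent hc α
    have hg : ∀ i i' j j', g α (i, j) (i', j') =
        ∑ k, ∑ k', w k k' * h (i, j, k) (i', j', k') := by
      intro i i' j j'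
      simp only [hdec₁]
      exact hw fun α' => g α' (i, j) (i', j')
    refine mem_span_kronecker_of_slices
      (StarAlgebra.adjoin ℂ (Set.range a)).toSubalgebra.toSubmodule
      (StarAlgebra.adjoin ℂ (Set.range b)).toSubalgebra.toSubmodule (g α) ?_ ?_
    · intro j j'
      have : (Matrix.of fun i i' => g α (i, j) (i', j')) =
          ∑ k, ∑ k', w k k' • ∑ β, e β (j, k) (j', k') • a β := by
        ext i i'
        simp [hg, hdec₂, Matrix.sum_apply, mul_comm]
      rw [this]
      exact Submodule.sum_mem _ fun k _ => Submodule.sum_mem _ fun k' _ =>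
        Submodule.smul_mem _ _ <| Submodule.sum_mem _ fun β _ => Submodule.smul_mem _ _ <|
          StarAlgebra.subset_adjoin ℂ _ ⟨β, rfl⟩
    · intro i i'
      have : (Matrix.of fun j j' => g α (i, j) (i', j')) =
          ∑ k, ∑ k', w k k' • ∑ γ, f γ (i, k) (i', k') • b γ := by
        ext j j'
        simp [hg, hdec₃, Matrix.sum_apply, mul_comm]
      rw [this]
      exact Submodule.sum_mem _ fun k _ => Submodule.sum_mem _ fun k' _ =>
        Submodule.smul_mem _ _ <| Submodule.sum_mem _ fun γ _ => Submodule.smul_mem _ _ <|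
          StarAlgebra.subset_adjoin ℂ _ ⟨γ, rfl⟩
  | algebraMap r =>
    rw [Algebra.algebraMap_eq_smul_one]
    exact Submodule.smul_mem _ _ <| Submodule.subset_span
      ⟨1, one_mem _, 1, one_mem _, Matrix.one_kronecker_one.symm⟩
  | add y z _ _ hy hz => exact Submodule.add_mem _ hy hz
  | mul y z _ _ hy hz =>
    have hyz := Submodule.mul_mem_mul hy hz
    rw [Submodule.span_mul_span] at hyz
    refine Submodule.span_mono ?_ hyz
    rintro _ ⟨_, ⟨p, hp, q, hq, rfl⟩, _, ⟨p', hp', q', hq', rfl⟩, rfl⟩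
    exact ⟨p * p', mul_mem hp hp', q * q', mul_mem hq hq',
      (Matrix.mul_kronecker_mul p p' q q').symm⟩
  | star y hmem hy =>
    clear hmem
    induction hy using Submodule.span_induction with
    | mem y hy =>
      obtain ⟨p, hp, q, hq, rfl⟩ := hy
      exact Submodule.subset_span ⟨star p, star_mem hp, star q, star_mem hq,
        Matrix.conjTranspose_kronecker p q⟩
    | zero => simp
    | add y z _ _ hy hz =>
      rw [star_add]
      exact Submodule.add_mem _ hy hz
    | smul r y _ hy =>
      rw [star_smul]
      exact Submodule.smul_mem _ _ hy
end

section
/- Let l₀ : Matrix (n₁ × n₂) (n₁ × n₂) ℂ and r₀ : Matrix (n₂ × n₃) (n₂ × n₃) ℂ, and define l, r : Matrix (n₁ × n₂ × n₃) (n₁ × n₂ × n₃) ℂ by l ((i,j,k),(i',j',k')) = l₀ ((i,j),(i',j')) · (if k = k' then 1 else 0) and r ((i,j,k),(i',j',k')) = (if i = i' then 1 else 0) · r₀ ((j,k),(j',k')). Suppose l₀ = ∑_{i ∈ s} aᵢ ⊗ₖ bᵢ with aᵢ : Matrix n₁ n₁ ℂ, bᵢ : Matrix n₂ n₂ ℂ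 and (aᵢ)_{i∈s} linearly independent over ℂ, and r₀ = ∑_{j ∈ t} cⱼ ⊗ₖ dⱼ with cⱼ : Matrix n₂ n₂ ℂ, dⱼ : Matrix n₃ n₃ ℂ and (dⱼ)_{j∈t} linearly independent over ℂ. Then l * r = r * l if and only if bᵢ * cⱼ = cⱼ * bᵢ for all i ∈ s and j ∈ t; i.e., l and r commute if and only if the induced algebras of l and of r on the middle factor commute elementwise. -/
/-!
Expanding both decompositions, `l * r = ∑ aᵢ ⊗ (bᵢ * cⱼ) ⊗ dⱼ` and `r * l = ∑ aᵢ ⊗ (cⱼ * bᵢ) ⊗ dⱼ`,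
because `l` acts as the identity on the third factor and `r` as the identity on the first
(`liftL_mul_liftR_apply`, `liftR_mul_liftL_apply`). Hence `l` and `r` commute iff
`∑ aᵢ ⊗ (bᵢ * cⱼ - cⱼ * bᵢ) ⊗ dⱼ = 0`. As the `aᵢ` and the `dⱼ` are linearly independent, so are
the `aᵢ ⊗ dⱼ`, and every coefficient `bᵢ * cⱼ - cⱼ * bᵢ` must vanish; this is applied entry by entry
in the middle factor (`coeff_eq_zero_of_sum_mul_mul`).
-/

open Matrix Kronecker

/-- The extension of an operator on factors `1,2` of a tripartite system,
acting as the identity on factor `3`. -/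
def liftL {n₁ n₂ n₃ : Type*} [DecidableEq n₃]
    (l₀ : Matrix (n₁ × n₂) (n₁ × n₂) ℂ) :
    Matrix (n₁ × n₂ × n₃) (n₁ × n₂ × n₃) ℂ :=
  fun x y => l₀ (x.1, x.2.1) (y.1, y.2.1) * (if x.2.2 = y.2.2 then 1 else 0)

/-- The extension of an operator on factors `2,3` of a tripartite system,
acting as the identity on factor `1`. -/
def liftR {n₁ n₂ n₃ : Type*} [DecidableEq n₁]
    (r₀ : Matrix (n₂ × n₃) (n₂ × n₃) ℂ) :
    Matrix (n₁ × n₂ × n₃) (n₁ × n₂ × n₃) ℂ :=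
  fun x y => (if x.1 = y.1 then 1 else 0) * r₀ (x.2.1, x.2.2) (y.2.1, y.2.2)

lemma liftL_mul_liftR_apply {n₁ n₂ n₃ : Type*} [Fintype n₁] [Fintype n₂] [Fintype n₃]
    [DecidableEq n₁] [DecidableEq n₃] {ι κ : Type*} (s : Finset ι) (t : Finset κ)
    (a : ι → Matrix n₁ n₁ ℂ) (b : ι → Matrix n₂ n₂ ℂ)
    (c : κ → Matrix n₂ n₂ ℂ) (d : κ → Matrix n₃ n₃ ℂ) (x y : n₁ × n₂ × n₃) :
    (liftL (n₃ := n₃) (∑ i ∈ s, a i ⊗ₖ b i) * liftR (n₁ := n₁) (∑ j ∈ t, c j ⊗ₖ d j)) x y =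
      ∑ i ∈ s, ∑ j ∈ t, a i x.1 y.1 * (b i * c j) x.2.1 y.2.1 * d j x.2.2 y.2.2 := by
  obtain ⟨x₁, x₂, x₃⟩ := x
  obtain ⟨y₁, y₂, y₃⟩ := y
  have collapse : ∀ (l₀ : Matrix (n₁ × n₂) (n₁ × n₂) ℂ) (r₀ : Matrix (n₂ × n₃) (n₂ × n₃) ℂ),
      (liftL (n₃ := n₃) l₀ * liftR (n₁ := n₁) r₀) (x₁, x₂, x₃) (y₁, y₂, y₃) =
      ∑ m, l₀ (x₁, x₂) (y₁, m) * r₀ (m, x₃) (y₂, y₃) := by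
    intro l₀ r₀
    simp [Matrix.mul_apply, liftL, liftR, Fintype.sum_prod_type, Finset.sum_ite_irrel]
  rw [collapse]
  simp only [Matrix.sum_apply, Matrix.kroneckerMap_apply, Finset.sum_mul_sum, Matrix.mul_apply]
  rw [Finset.sum_comm]
  refine Finset.sum_congr rfl fun i _ => ?_
  rw [Finset.sum_comm]
  refine Finset.sum_congr rfl fun j _ => ?_
  rw [Finset.mul_sum, Finset.sum_mul]
  exact Finset.sum_congr rfl fun m _ => by ring

lemma liftR_mul_liftL_apply {n₁ n₂ n₃ : Type*} [Fintype n₁] [Fintype n₂] [Fintype n₃]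
    [DecidableEq n₁] [DecidableEq n₃] {ι κ : Type*} (s : Finset ι) (t : Finset κ)
    (a : ι → Matrix n₁ n₁ ℂ) (b : ι → Matrix n₂ n₂ ℂ)
    (c : κ → Matrix n₂ n₂ ℂ) (d : κ → Matrix n₃ n₃ ℂ) (x y : n₁ × n₂ × n₃) :
    (liftR (n₁ := n₁) (∑ j ∈ t, c j ⊗ₖ d j) * liftL (n₃ := n₃) (∑ i ∈ s, a i ⊗ₖ b i)) x y =
      ∑ i ∈ s, ∑ j ∈ t, a i x.1 y.1 * (c j * b i) x.2.1 y.2.1 * d j x.2.2 y.2.2 := by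
  obtain ⟨x₁, x₂, x₃⟩ := x
  obtain ⟨y₁, y₂, y₃⟩ := y
  have collapse : ∀ (l₀ : Matrix (n₁ × n₂) (n₁ × n₂) ℂ) (r₀ : Matrix (n₂ × n₃) (n₂ × n₃) ℂ),
      (liftR (n₁ := n₁) r₀ * liftL (n₃ := n₃) l₀) (x₁, x₂, x₃) (y₁, y₂, y₃) =
      ∑ m, r₀ (x₂, x₃) (m, y₃) * l₀ (x₁, m) (y₁, y₂) := by
    intro l₀ r₀
    simp [Matrix.mul_apply, liftL, liftR, Fintype.sum_prod_type, Finset.sum_ite_irrel]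
  rw [collapse]
  simp only [Matrix.sum_apply, Matrix.kroneckerMap_apply, Finset.sum_mul_sum, Matrix.mul_apply]
  simp_rw [Finset.sum_comm (s := t) (t := s)]
  rw [Finset.sum_comm]
  refine Finset.sum_congr rfl fun i _ => ?_
  rw [Finset.sum_comm]
  refine Finset.sum_congr rfl fun j _ => ?_
  rw [Finset.mul_sum, Finset.sum_mul]
  exact Finset.sum_congr rfl fun m _ => by ring

/-- If the `aᵢ` and the `dⱼ` are linearly independent, then so are the `aᵢ ⊗ dⱼ`; the hypothesis
`h` says, entry by entry, that `∑ fᵢⱼ • aᵢ ⊗ dⱼ = 0`. -/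
lemma coeff_eq_zero_of_sum_mul_mul {n₁ n₃ ι κ : Type*} {s : Finset ι} {t : Finset κ}
    {a : ι → Matrix n₁ n₁ ℂ} {d : κ → Matrix n₃ n₃ ℂ}
    (ha : LinearIndependent ℂ (fun i : s => a i))
    (hd : LinearIndependent ℂ (fun j : t => d j)) (f : ι → κ → ℂ)
    (h : ∀ x x' z z', ∑ i ∈ s, ∑ j ∈ t, a i x x' * f i j * d j z z' = 0) :
    ∀ i ∈ s, ∀ j ∈ t, f i j = 0 := by
  -- For fixed `z`, `z'` the sum is a linear combination of the `aᵢ`, so its coefficients vanish.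
  have key : ∀ z z', ∀ i ∈ s, ∑ j ∈ t, f i j * d j z z' = 0 := by
    intro z z'
    refine (linearIndepOn_finset_iff (s := s) (v := a)).1 ha
      (fun i => ∑ j ∈ t, f i j * d j z z') ?_
    ext x x'
    rw [Matrix.zero_apply, ← h x x' z z', Matrix.sum_apply]
    refine Finset.sum_congr rfl fun i _ => ?_
    rw [Matrix.smul_apply, smul_eq_mul, Finset.sum_mul]
    exact Finset.sum_congr rfl fun j _ => by ring
  intro i hi
  refine (linearIndepOn_finset_iff (s := t) (v := d)).1 hd (f i) ?_
  ext z z'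
  simpa [Matrix.sum_apply] using key z z' i hi

/-- `l` and `r` commute iff the induced algebras on the middle
factor commute elementwise. -/
theorem commute_iff_induced_algebras_commute
    {n₁ n₂ n₃ : Type*} [Fintype n₁] [Fintype n₂] [Fintype n₃]
    [DecidableEq n₁] [DecidableEq n₂] [DecidableEq n₃]
    [Nonempty n₁] [Nonempty n₂] [Nonempty n₃]
    {ι κ : Type*} (s : Finset ι) (t : Finset κ)
    (l₀ : Matrix (n₁ × n₂) (n₁ × n₂) ℂ) (r₀ : Matrix (n₂ × n₃) (n₂ × n₃) ℂ)
    (a : ι → Matrix n₁ n₁ ℂ) (b : ι → Matrix n₂ n₂ ℂ)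
    (c : κ → Matrix n₂ n₂ ℂ) (d : κ → Matrix n₃ n₃ ℂ)
    (hl : l₀ = ∑ i ∈ s, a i ⊗ₖ b i)
    (ha : LinearIndependent ℂ (fun i : s => a i))
    (hr : r₀ = ∑ j ∈ t, c j ⊗ₖ d j)
    (hd : LinearIndependent ℂ (fun j : t => d j)) :
    liftL (n₃ := n₃) l₀ * liftR (n₁ := n₁) r₀ = liftR (n₁ := n₁) r₀ * liftL (n₃ := n₃) l₀ ↔
      ∀ i ∈ s, ∀ j ∈ t, b i * c j = c j * b i := by
  subst hl hr
  constructor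
  · intro h i hi j hj
    ext y y'
    refine sub_eq_zero.1 (coeff_eq_zero_of_sum_mul_mul ha hd
      (fun i j => (b i * c j) y y' - (c j * b i) y y') (fun x x' z z' => ?_) i hi j hj)
    have h' := congrFun (congrFun h (x, y, z)) (x', y', z')
    rw [liftL_mul_liftR_apply, liftR_mul_liftL_apply, ← sub_eq_zero] at h'
    simpa only [← Finset.sum_sub_distrib, ← sub_mul, ← mul_sub] using h'
  · intro h
    ext x y
    rw [liftL_mul_liftR_apply, liftR_mul_liftL_apply]
    exact Finset.sum_congr rfl fun i hi => Finset.sum_congr rfl fun j hj => by rw [h i hi j hj]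
end

section
/- Every star subalgebra A of Matrix (Fin 2) (Fin 2) ℂ (a subalgebra containing the identity and closed under conjugate transpose) has ℂ-dimension 1, 2, or 4: Module.finrank ℂ A = 1 ∨ Module.finrank ℂ A = 2 ∨ Module.finrank ℂ A = 4. -/
/-!
The dimension lies between `1` and `4`, so it suffices that a star subalgebra `A` of dimension
greater than `2` is everything. Sending a matrix to its bottom row cannot be injective on `A`, so
`A` contains some nonzero `x` supported on the top row; then `x * star x` is a nonzero multiple of
the projection `E₀₀`, so `E₀₀` and `E₁₁ = 1 - E₀₀` lie in `A`. Sending a matrix to its diagonal is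
not injective on `A` either, so `A` contains a nonzero off-diagonal matrix; compressing it by
`E₀₀` and `E₁₁` and taking adjoints yields `E₀₁` and `E₁₀`.
-/

open Matrix ComplexOrder in
theorem starSubalgebra_eq_top_of_two_lt_finrank
    (A : StarSubalgebra ℂ (Matrix (Fin 2) (Fin 2) ℂ)) (h : 2 < Module.finrank ℂ A) :
    A = ⊤ := by
  have hker (f : Matrix (Fin 2) (Fin 2) ℂ →ₗ[ℂ] (Fin 2 → ℂ)) : ∃ x ∈ A, x ≠ 0 ∧ f x = 0 := by
    have hlt : Module.finrank ℂ (Fin 2 → ℂ) < Module.finrank ℂ A := by simpa using h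
    obtain ⟨⟨x, hx⟩, hx0, hne⟩ := (Submodule.ne_bot_iff _).1
      (LinearMap.ker_ne_bot_of_finrank_lt
        (f := f ∘ₗ A.toSubalgebra.toSubmodule.subtype) hlt)
    exact ⟨x, hx, fun h0 => hne (Subtype.ext h0), hx0⟩
  have h00 : single 0 0 1 ∈ A := by
    obtain ⟨x, hx, hne, hx0⟩ := hker (LinearMap.proj 1)
    have h10 : x 1 0 = 0 := congrFun hx0 0
    have h11 : x 1 1 = 0 := congrFun hx0 1
    have hxx : x * star x ≠ 0 := fun h0 => hne (by
      rwa [star_eq_conjTranspose, self_mul_conjTranspose_eq_zero] at h0)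
    have hform : x * star x = (x * star x) 0 0 • single 0 0 1 := by
      ext i j
      fin_cases i <;> fin_cases j <;>
        simp [mul_apply, star_apply, h10, h11]
    have hc : (x * star x) 0 0 ≠ 0 := fun h0 => hxx (by rw [hform, h0, zero_smul])
    have := A.smul_mem (mul_mem hx (star_mem hx)) ((x * star x) 0 0)⁻¹
    rwa [hform, smul_smul, ← hform, inv_mul_cancel₀ hc, one_smul] at this
  have h11 : single 1 1 1 ∈ A := by
    have : (single 1 1 1 : Matrix (Fin 2) (Fin 2) ℂ) = 1 - single 0 0 1 := by
      ext i j
      fin_cases i <;> fin_cases j <;> simp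
    rw [this]
    exact sub_mem (one_mem A) h00
  have hdiag (i : Fin 2) : single i i 1 ∈ A := by
    fin_cases i
    exacts [h00, h11]
  have hsingle {x : Matrix (Fin 2) (Fin 2) ℂ} (hx : x ∈ A) {i j : Fin 2} (hij : x i j ≠ 0) :
      single i j 1 ∈ A := by
    have := A.smul_mem (mul_mem (mul_mem (hdiag i) hx) (hdiag j)) (x i j)⁻¹
    rw [single_mul_mul_single] at this
    simpa [hij] using this
  have hstar {i j : Fin 2} (hij : single i j 1 ∈ A) : single j i 1 ∈ A := by
    simpa [star_eq_conjTranspose] using star_mem hij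
  have h01 : single 0 1 1 ∈ A := by
    obtain ⟨x, hx, hne, hx0⟩ := hker (diagLinearMap (Fin 2) ℂ ℂ)
    have hx00 : x 0 0 = 0 := congrFun hx0 0
    have hx11 : x 1 1 = 0 := congrFun hx0 1
    by_cases hb : x 0 1 = 0
    · refine hstar (hsingle hx fun hc => hne ?_)
      ext i j
      fin_cases i <;> fin_cases j <;> simp [*]
    · exact hsingle hx hb
  have hall (i j : Fin 2) : single i j 1 ∈ A := by
    fin_cases i <;> fin_cases j
    exacts [h00, h01, hstar h01, h11]
  refine eq_top_iff.2 fun x _ => ?_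
  rw [matrix_eq_sum_single x]
  refine sum_mem fun i _ => sum_mem fun j _ => ?_
  simpa using A.smul_mem (hall i j) (x i j)

/-- Every star subalgebra of the 2×2 complex matrices has
`ℂ`-dimension 1, 2, or 4. -/
theorem starSubalgebra_finrank_qubit
    (A : StarSubalgebra ℂ (Matrix (Fin 2) (Fin 2) ℂ)) :
    Module.finrank ℂ A = 1 ∨ Module.finrank ℂ A = 2 ∨ Module.finrank ℂ A = 4 := by
  have : Module.Finite ℂ A :=
    inferInstanceAs (Module.Finite ℂ A.toSubalgebra.toSubmodule)
  have hpos : 0 < Module.finrank ℂ A := Module.finrank_pos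
  by_cases h : 2 < Module.finrank ℂ A
  · have h4 : Module.finrank ℂ A = 4 := by
      have : A.toSubalgebra.toSubmodule = ⊤ := by
        rw [starSubalgebra_eq_top_of_two_lt_finrank A h]
        rfl
      change Module.finrank ℂ A.toSubalgebra.toSubmodule = 4
      rw [this, finrank_top, Module.finrank_matrix]
      simp
    exact Or.inr (Or.inr h4)
  · omega
end

section
/- If A is a star subalgebra of Matrix (Fin 2) (Fin 2) ℂ with Module.finrank ℂ A = 2, then there exists a Pauli operator P, i.e. a matrix P : Matrix (Fin 2) (Fin 2) ℂ with Pᴴ = P, Pᴴ * P = 1 and Matrix.trace P = 0, such that A = StarSubalgebra.adjoin ℂ {P}. -/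
open Matrix

/-!
A unital star subalgebra of dimension two contains a non-scalar element, hence, by taking the
real or imaginary part, a non-scalar Hermitian one. Subtracting half of the trace makes it traceless
and keeps it nonzero. A nonzero traceless Hermitian `2 × 2` matrix squares to a positive
scalar, so rescaling it gives a Pauli operator `P` in the algebra. Since `1` and `P` are linearly
independent, they span the algebra.
-/

/-- The 2×2 Cayley–Hamilton theorem for a traceless Hermitian matrix: its square is minus its
determinant, here `|a|² + |b|²` for the first row `(a, b)`. -/
lemma sq_eq_pos_smul_one {T : Matrix (Fin 2) (Fin 2) ℂ} (hT : Tᴴ = T) (htr : T.trace = 0)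
    (h0 : T ≠ 0) : ∃ r : ℝ, r ≠ 0 ∧ T * T = ((r : ℂ) ^ 2) • (1 : Matrix (Fin 2) (Fin 2) ℂ) := by
  have e00 : star (T 0 0) = T 0 0 := congrFun (congrFun hT 0) 0
  have e10 : star (T 0 1) = T 1 0 := congrFun (congrFun hT 1) 0
  have e11 : T 1 1 = - T 0 0 := by
    rw [Matrix.trace_fin_two] at htr
    linear_combination htr
  have hpos : 0 < Complex.normSq (T 0 0) + Complex.normSq (T 0 1) := by
    refine lt_of_le_of_ne (add_nonneg (Complex.normSq_nonneg _) (Complex.normSq_nonneg _)) ?_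
    intro h
    have ha := Complex.normSq_nonneg (T 0 0)
    have hb := Complex.normSq_nonneg (T 0 1)
    have ha0 : T 0 0 = 0 := Complex.normSq_eq_zero.1 (by linarith)
    have hb0 : T 0 1 = 0 := Complex.normSq_eq_zero.1 (by linarith)
    apply h0
    ext i j
    fin_cases i <;> fin_cases j <;> simp [ha0, hb0, e11, ← e10]
  refine ⟨Real.sqrt (Complex.normSq (T 0 0) + Complex.normSq (T 0 1)),
    (Real.sqrt_pos.2 hpos).ne', ?_⟩
  have hr : ((Real.sqrt (Complex.normSq (T 0 0) + Complex.normSq (T 0 1)) : ℝ) : ℂ) ^ 2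
      = T 0 0 * T 0 0 + T 0 1 * T 1 0 := by
    rw [← Complex.ofReal_pow, Real.sq_sqrt hpos.le, Complex.ofReal_add,
      ← Complex.mul_conj, ← Complex.mul_conj, ← e10]
    congr 2
  rw [hr]
  ext i j
  fin_cases i <;> fin_cases j <;> simp [Matrix.mul_apply, Fin.sum_univ_two, e11] <;> ring

/-- A non-scalar Hermitian element of a star subalgebra yields a Pauli operator in it. -/
lemma exists_pauli_mem (A : StarSubalgebra ℂ (Matrix (Fin 2) (Fin 2) ℂ))
    {H : Matrix (Fin 2) (Fin 2) ℂ} (hHA : H ∈ A) (hH : Hᴴ = H)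
    (hs : ∀ c : ℂ, H ≠ c • (1 : Matrix (Fin 2) (Fin 2) ℂ)) :
    ∃ P ∈ A, Pᴴ = P ∧ Pᴴ * P = 1 ∧ P.trace = 0 := by
  have hst : star H.trace = H.trace := by rw [← Matrix.trace_conjTranspose, hH]
  have hT : (H - (H.trace / 2) • (1 : Matrix (Fin 2) (Fin 2) ℂ))ᴴ
      = H - (H.trace / 2) • (1 : Matrix (Fin 2) (Fin 2) ℂ) := by
    rw [conjTranspose_sub, conjTranspose_smul, hH, conjTranspose_one, star_div₀, hst]
    simp
  have htr : (H - (H.trace / 2) • (1 : Matrix (Fin 2) (Fin 2) ℂ)).trace = 0 := by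
    simp [Matrix.trace_sub, Matrix.trace_smul]
  have h0 : H - (H.trace / 2) • (1 : Matrix (Fin 2) (Fin 2) ℂ) ≠ 0 := sub_ne_zero.2 (hs _)
  have hTA : H - (H.trace / 2) • (1 : Matrix (Fin 2) (Fin 2) ℂ) ∈ A :=
    sub_mem hHA (SMulMemClass.smul_mem _ (one_mem A))
  generalize H - (H.trace / 2) • (1 : Matrix (Fin 2) (Fin 2) ℂ) = T at hT htr h0 hTA
  obtain ⟨r, hr, hsq⟩ := sq_eq_pos_smul_one hT htr h0
  have hrc : (r : ℂ) ≠ 0 := Complex.ofReal_ne_zero.2 hr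
  have hP : ((r : ℂ)⁻¹ • T)ᴴ = (r : ℂ)⁻¹ • T := by
    rw [conjTranspose_smul, hT]
    simp
  refine ⟨(r : ℂ)⁻¹ • T, SMulMemClass.smul_mem _ hTA, hP, ?_, ?_⟩
  · rw [hP, smul_mul_smul_comm, hsq, smul_smul]
    have : (r : ℂ)⁻¹ * (r : ℂ)⁻¹ * (r : ℂ) ^ 2 = 1 := by field_simp
    rw [this, one_smul]
  · rw [Matrix.trace_smul, htr, smul_zero]

/-- A 2-dimensional star subalgebra of the 2×2 complex matrices is
generated by a single Pauli operator, i.e. a Hermitian, unitary, traceless matrix. -/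
theorem two_dim_starSubalgebra_generated_by_pauli
    (A : StarSubalgebra ℂ (Matrix (Fin 2) (Fin 2) ℂ))
    (hA : Module.finrank ℂ A = 2) :
    ∃ P : Matrix (Fin 2) (Fin 2) ℂ,
      Pᴴ = P ∧ Pᴴ * P = 1 ∧ Matrix.trace P = 0 ∧
      A = StarAlgebra.adjoin ℂ {P} := by
  have hA' : Module.finrank ℂ (Subalgebra.toSubmodule A.toSubalgebra) = 2 := hA
  obtain ⟨x, hxA, hx⟩ : ∃ x ∈ A, ∀ c : ℂ, x ≠ c • (1 : Matrix (Fin 2) (Fin 2) ℂ) := by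
    by_contra! h
    have hle : Subalgebra.toSubmodule A.toSubalgebra
        ≤ Submodule.span ℂ {(1 : Matrix (Fin 2) (Fin 2) ℂ)} := by
      intro x hx
      obtain ⟨c, rfl⟩ := h x hx
      exact Submodule.smul_mem _ _ (Submodule.mem_span_singleton_self _)
    have h1 := Submodule.finrank_mono hle
    rw [hA', finrank_span_singleton one_ne_zero] at h1
    omega
  have hxs : xᴴ ∈ A := star_mem hxA
  obtain ⟨H, hHA, hH, hHs⟩ : ∃ H ∈ A, Hᴴ = H ∧
      ∀ c : ℂ, H ≠ c • (1 : Matrix (Fin 2) (Fin 2) ℂ) := by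
    -- If `x + xᴴ` and `I • (x - xᴴ)` were both scalar, so would be `2 • x`.
    by_cases h1 : ∀ c : ℂ, x + xᴴ ≠ c • (1 : Matrix (Fin 2) (Fin 2) ℂ)
    · exact ⟨x + xᴴ, add_mem hxA hxs, by simp [add_comm], h1⟩
    · push Not at h1
      obtain ⟨c, hc⟩ := h1
      refine ⟨Complex.I • (x - xᴴ), SMulMemClass.smul_mem _ (sub_mem hxA hxs), ?_, ?_⟩
      · rw [conjTranspose_smul, conjTranspose_sub, conjTranspose_conjTranspose]
        simp [← smul_neg]
      · intro d hd
        apply hx ((c - Complex.I * d) / 2)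
        ext i j
        have hc' := congrFun (congrFun hc i) j
        have hd' := congrFun (congrFun hd i) j
        simp only [Matrix.add_apply, Matrix.sub_apply, Matrix.smul_apply, smul_eq_mul]
          at hc' hd' ⊢
        linear_combination (1 / 2 : ℂ) * hc' - (Complex.I / 2) * hd'
          + (x i j - xᴴ i j) / 2 * Complex.I_sq
  obtain ⟨P, hPA, hPH, hPU, hPt⟩ := exists_pauli_mem A hHA hH hHs
  refine ⟨P, hPH, hPU, hPt, le_antisymm ?_ ?_⟩
  · have hli : LinearIndependent ℂ ![(1 : Matrix (Fin 2) (Fin 2) ℂ), P] := by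
      rw [LinearIndependent.pair_iff]
      intro s t h
      -- The trace kills the `P` term, and `P ≠ 0` because it is unitary.
      have hs : s = 0 := by
        have := congrArg Matrix.trace h
        simpa [Matrix.trace_add, Matrix.trace_smul, hPt] using this
      refine ⟨hs, ?_⟩
      rw [hs, zero_smul, zero_add] at h
      refine (smul_eq_zero.1 h).resolve_right ?_
      rintro rfl
      simp at hPU
    have hle : Submodule.span ℂ (Set.range ![(1 : Matrix (Fin 2) (Fin 2) ℂ), P])
        ≤ Subalgebra.toSubmodule A.toSubalgebra := by
      rw [Submodule.span_le]
      rintro _ ⟨i, rfl⟩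
      fin_cases i
      · exact one_mem A
      · exact hPA
    have heq := Submodule.eq_of_le_of_finrank_eq hle
      (by rw [hA', finrank_span_eq_card hli, Fintype.card_fin])
    have hle' : Submodule.span ℂ (Set.range ![(1 : Matrix (Fin 2) (Fin 2) ℂ), P])
        ≤ Subalgebra.toSubmodule (StarAlgebra.adjoin ℂ {P}).toSubalgebra := by
      rw [Submodule.span_le]
      rintro _ ⟨i, rfl⟩
      fin_cases i
      · exact one_mem (StarAlgebra.adjoin ℂ {P})
      · exact StarAlgebra.self_mem_adjoin_singleton ℂ P
    rw [heq] at hle'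
    exact fun y hy => hle' hy
  · exact StarAlgebra.adjoin_le (Set.singleton_subset_iff.2 hPA)
end

section
/- If A and A' are star subalgebras of Matrix (Fin 2) (Fin 2) ℂ with Module.finrank ℂ A = 2 and Module.finrank ℂ A' = 2, and every element of A commutes with every element of A' (for all a ∈ A and a' ∈ A', a * a' = a' * a), then A = A'. -/
/-!
A two-dimensional subalgebra `A` contains a non-scalar matrix `a`. The commutant of a non-scalar
`2 × 2` matrix is spanned by `1` and `a` (`exists_eq_smul_one_add_smul_of_commute`), so everything
commuting with `A` already lies in `A`. Hence `A' ≤ A`, and equality follows by comparing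
dimensions.
-/

/-- The commutant of a non-scalar `2 × 2` matrix `a` consists of the combinations of `1`
and `a`. -/
lemma exists_eq_smul_one_add_smul_of_commute (a b : Matrix (Fin 2) (Fin 2) ℂ)
    (ha : ∀ c : ℂ, a ≠ c • 1) (hab : a * b = b * a) :
    ∃ x y : ℂ, b = x • 1 + y • a := by
  have h00 := congrFun (congrFun hab 0) 0
  have h01 := congrFun (congrFun hab 0) 1
  have h10 := congrFun (congrFun hab 1) 0
  simp only [Matrix.mul_apply, Fin.sum_univ_two] at h00 h01 h10
  -- It suffices to match the off-diagonal entries and the difference of the diagonal ones.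
  suffices h : ∃ y : ℂ, b 0 1 = y * a 0 1 ∧ b 1 0 = y * a 1 0 ∧
      b 0 0 - b 1 1 = y * (a 0 0 - a 1 1) by
    obtain ⟨y, h1, h2, h3⟩ := h
    refine ⟨b 0 0 - y * a 0 0, y, ?_⟩
    ext i j
    fin_cases i <;> fin_cases j <;> simp [h1, h2]
    linear_combination -h3
  by_cases p : a 0 1 = 0
  · by_cases q : a 1 0 = 0
    · have r : a 0 0 - a 1 1 ≠ 0 := by
        intro r
        apply ha (a 0 0)
        ext i j
        fin_cases i <;> fin_cases j <;> simp [p, q]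
        linear_combination -r
      refine ⟨(b 0 0 - b 1 1) / (a 0 0 - a 1 1), ?_, ?_, ?_⟩
      · rw [p, mul_zero]
        refine (mul_eq_zero.1 ?_).resolve_left r
        linear_combination h01 - (b 1 1 - b 0 0) * p
      · rw [q, mul_zero]
        refine (mul_eq_zero.1 ?_).resolve_left r
        linear_combination -h10 + (b 0 0 - b 1 1) * q
      · field_simp
    · refine ⟨b 1 0 / a 1 0, ?_, ?_, ?_⟩ <;> field_simp
      · linear_combination -h00
      · linear_combination h10
  · refine ⟨b 0 1 / a 0 1, ?_, ?_, ?_⟩ <;> field_simp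
    · linear_combination h00
    · linear_combination -h01

/-- Two commuting 2-dimensional star subalgebras of the 2×2
complex matrices are equal. -/
theorem commuting_two_dim_starSubalgebras_eq
    (A A' : StarSubalgebra ℂ (Matrix (Fin 2) (Fin 2) ℂ))
    (hA : Module.finrank ℂ A = 2) (hA' : Module.finrank ℂ A' = 2)
    (hcomm : ∀ a ∈ A, ∀ a' ∈ A', a * a' = a' * a) :
    A = A' := by
  obtain ⟨a, haA, ha⟩ : ∃ a ∈ A, ∀ c : ℂ, a ≠ c • 1 := by
    by_contra! h
    have hbot : A.toSubalgebra = ⊥ := by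
      refine eq_bot_iff.2 fun a haA => ?_
      obtain ⟨c, rfl⟩ := h a haA
      exact Subalgebra.smul_mem _ (one_mem _) c
    have h1 : Module.finrank ℂ A.toSubalgebra = 1 := by
      rw [hbot, Subalgebra.finrank_bot]
    have h2 : Module.finrank ℂ A.toSubalgebra = 2 := hA
    omega
  have hle : A'.toSubalgebra ≤ A.toSubalgebra := by
    intro b hb
    obtain ⟨x, y, rfl⟩ := exists_eq_smul_one_add_smul_of_commute a b ha (hcomm a haA b hb)
    exact add_mem (Subalgebra.smul_mem _ (one_mem _) x) (Subalgebra.smul_mem _ haA y)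
  exact (StarSubalgebra.toSubalgebra_injective
    (Subalgebra.eq_of_le_of_finrank_eq hle (hA'.trans hA.symm))).symm
end

section
/- Let P, Q : Matrix (Fin 2) (Fin 2) ℂ be Pauli operators (Hermitian, unitary, traceless) that do not commute: P * Q ≠ Q * P. Then there exist U ∈ Matrix.unitaryGroup (Fin 2) ℂ and real numbers a, b with b ≠ 0 such that Uᴴ * P * U = Z and Uᴴ * Q * U = (a : ℂ) • Z + (b : ℂ) • X. -/
/-!
A Pauli operator `P` with upper left entry `p ≠ -1` is conjugated to `Z` by the normalised sum
`V = (P + Z) / √(2 (1 + p))`: from `P² = Z² = 1` one gets `(P + Z) P = Z (P + Z)`, while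
`(P + Z)² = 2 + (P Z + Z P) = 2 (1 + p)` is a scalar, so `V` is a Hermitian unitary with
`V P V = Z`. If `p = -1`, then `P = -Z` and conjugation by `X` does the job.

After this change of basis `Q` becomes a traceless Hermitian matrix with real diagonal `a, -a` and
off-diagonal entry `w`, which is nonzero because diagonal matrices commute with `Z`. Conjugation by
the diagonal unitary `diag(1, conj w / |w|)` fixes `Z` and replaces `w` by `b = |w|`.
-/

open Matrix

/-- The Pauli matrix `Z`. -/
def Zm : Matrix (Fin 2) (Fin 2) ℂ := !![1, 0; 0, -1]

/-- The Pauli matrix `X`. -/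
def Xm : Matrix (Fin 2) (Fin 2) ℂ := !![0, 1; 1, 0]

lemma exists_entries_of_hermitian_traceless (P : Matrix (Fin 2) (Fin 2) ℂ)
    (hh : Pᴴ = P) (ht : Matrix.trace P = 0) :
    ∃ (p : ℝ) (z : ℂ), P = !![(p : ℂ), z; star z, -(p : ℂ)] := by
  have h00 : star (P 0 0) = P 0 0 := congrFun (congrFun hh 0) 0
  have h10 : star (P 0 1) = P 1 0 := congrFun (congrFun hh 1) 0
  rw [Matrix.trace_fin_two] at ht
  have hre : ((P 0 0).re : ℂ) = P 0 0 := Complex.conj_eq_iff_re.mp h00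
  refine ⟨(P 0 0).re, P 0 1, ?_⟩
  rw [hre, h10, ← eq_neg_of_add_eq_zero_right ht]
  exact Matrix.eta_fin_two P

lemma exists_unitary_conj_eq_Zm (P : Matrix (Fin 2) (Fin 2) ℂ)
    (hh : Pᴴ = P) (hu : Pᴴ * P = 1) (ht : Matrix.trace P = 0) :
    ∃ V ∈ Matrix.unitaryGroup (Fin 2) ℂ, Vᴴ * P * V = Zm := by
  obtain ⟨p, z, hP⟩ := exists_entries_of_hermitian_traceless P hh ht
  have hPP : P * P = 1 := by rwa [hh] at hu
  have hpz : (p : ℂ) * p + z * star z = 1 := by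
    have h := congrFun (congrFun hPP 0) 0
    simpa [hP, Matrix.mul_apply, Fin.sum_univ_two] using h
  have hpz' : p * p + Complex.normSq z = 1 := by
    have h : z * star z = (Complex.normSq z : ℂ) := Complex.mul_conj z
    rw [h] at hpz
    exact_mod_cast hpz
  by_cases hp : p = -1
  · have hz : z = 0 := by
      rw [← Complex.normSq_eq_zero]
      rw [hp] at hpz'
      linarith
    refine ⟨Xm, ?_, ?_⟩
    · rw [Matrix.mem_unitaryGroup_iff]
      ext i j
      fin_cases i <;> fin_cases j <;>
        simp [Xm, Matrix.star_eq_conjTranspose, Matrix.mul_apply]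
    · rw [hP, hp, hz]
      ext i j
      fin_cases i <;> fin_cases j <;> simp [Xm, Zm, Matrix.mul_apply]
  · have hpos : 0 < 2 * (1 + p) := by
      have : -1 ≤ p := by nlinarith [Complex.normSq_nonneg z]
      have : -1 < p := lt_of_le_of_ne this (Ne.symm hp)
      linarith
    -- `c` is the factor that normalises `P + Z`.
    obtain ⟨c, hc⟩ : ∃ c : ℝ, c * c * (2 * (1 + p)) = 1 := by
      refine ⟨(√(2 * (1 + p)))⁻¹, ?_⟩
      rw [← mul_inv, Real.mul_self_sqrt hpos.le, inv_mul_cancel₀ hpos.ne']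
    have hZZ : Zm * Zm = 1 := by
      ext i j
      fin_cases i <;> fin_cases j <;> simp [Zm]
    have hanti : P * Zm + Zm * P = ((2 * p : ℝ) : ℂ) • 1 := by
      rw [hP]
      ext i j
      fin_cases i <;> fin_cases j <;> simp [Zm] <;> ring
    have hZh : Zmᴴ = Zm := by
      ext i j
      fin_cases i <;> fin_cases j <;> simp [Zm]
    have hsq : (P + Zm) * (P + Zm) = ((2 * (1 + p) : ℝ) : ℂ) • 1 := by
      have : (P + Zm) * (P + Zm) = P * P + Zm * Zm + (P * Zm + Zm * P) := by noncomm_ring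
      rw [this, hPP, hZZ, hanti]
      push_cast
      module
    have hVh : ((c : ℂ) • (P + Zm))ᴴ = (c : ℂ) • (P + Zm) := by
      simp [Matrix.conjTranspose_add, hh, hZh]
    have hVV : ((c : ℂ) • (P + Zm)) * ((c : ℂ) • (P + Zm)) = 1 := by
      rw [smul_mul_smul_comm, hsq, smul_smul, ← Complex.ofReal_mul, ← Complex.ofReal_mul, hc,
        Complex.ofReal_one, one_smul]
    have hint : ((c : ℂ) • (P + Zm)) * P = Zm * ((c : ℂ) • (P + Zm)) := by
      rw [smul_mul_assoc, mul_smul_comm, add_mul, mul_add, hPP, hZZ, add_comm]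
    refine ⟨(c : ℂ) • (P + Zm), ?_, ?_⟩
    · rw [Matrix.mem_unitaryGroup_iff, Matrix.star_eq_conjTranspose, hVh, hVV]
    · rw [hVh, hint, mul_assoc, hVV, mul_one]

/-- Two non-commuting Pauli operators `P, Q` (Hermitian, unitary,
traceless) can be simultaneously brought, by a unitary change of basis, to the
form `P = Z` and `Q = a•Z + b•X` with `a, b` real and `b ≠ 0`. -/
theorem noncommuting_paulis_normal_form
    (P Q : Matrix (Fin 2) (Fin 2) ℂ)
    (hPh : Pᴴ = P) (hPu : Pᴴ * P = 1) (hPt : Matrix.trace P = 0)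
    (hQh : Qᴴ = Q) (hQu : Qᴴ * Q = 1) (hQt : Matrix.trace Q = 0)
    (hPQ : P * Q ≠ Q * P) :
    ∃ U ∈ Matrix.unitaryGroup (Fin 2) ℂ, ∃ a b : ℝ, b ≠ 0 ∧
      Uᴴ * P * U = Zm ∧ Uᴴ * Q * U = (a : ℂ) • Zm + (b : ℂ) • Xm := by
  obtain ⟨V, hV, hVP⟩ := exists_unitary_conj_eq_Zm P hPh hPu hPt
  have hVV : V * Vᴴ = 1 := Matrix.mem_unitaryGroup_iff.mp hV
  obtain ⟨a, w, hQ⟩ := exists_entries_of_hermitian_traceless (Vᴴ * Q * V)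
    (by simp [Matrix.conjTranspose_mul, hQh, mul_assoc])
    (by rw [Matrix.trace_mul_comm, ← mul_assoc, hVV, one_mul, hQt])
  have hw : w ≠ 0 := by
    rintro rfl
    have hcomm : (Vᴴ * P * V) * (Vᴴ * Q * V) = (Vᴴ * Q * V) * (Vᴴ * P * V) := by
      rw [hVP, hQ]
      ext i j
      fin_cases i <;> fin_cases j <;> simp [Zm]
    have hconj (A B : Matrix (Fin 2) (Fin 2) ℂ) :
        V * ((Vᴴ * A * V) * (Vᴴ * B * V)) * Vᴴ = A * B := by
      calc V * ((Vᴴ * A * V) * (Vᴴ * B * V)) * Vᴴ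
          = (V * Vᴴ) * A * (V * Vᴴ) * B * (V * Vᴴ) := by simp only [mul_assoc]
        _ = A * B := by simp only [hVV, one_mul, mul_one]
    apply hPQ
    rw [← hconj P Q, hcomm, hconj Q P]
  have hb : ‖w‖ ≠ 0 := norm_ne_zero_iff.mpr hw
  have hb' : (‖w‖ : ℂ) ≠ 0 := Complex.ofReal_ne_zero.mpr hb
  have hww : w * star w = (‖w‖ : ℂ) * ‖w‖ := by
    have h : w * star w = (‖w‖ : ℂ) ^ 2 := Complex.mul_conj' w
    rw [h, sq]
  -- The phase of `conj w`, which rotates `w` to the positive real number `‖w‖`.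
  obtain ⟨d, hd⟩ : ∃ d : ℂ, d = star w / ‖w‖ := ⟨_, rfl⟩
  have hsd : star d = w / ‖w‖ := by simp [hd]
  have hdd : d * star d = 1 := by
    rw [hsd, hd, div_mul_div_comm, mul_comm (star w), hww, div_self (mul_ne_zero hb' hb')]
  have hwd : w * d = ‖w‖ := by
    rw [hd, mul_div_assoc', hww, mul_div_cancel_right₀ _ hb']
  have hdw : star d * star w = ‖w‖ := by
    rw [hsd, div_mul_eq_mul_div, hww, mul_div_cancel_right₀ _ hb']
  have hD : !![1, 0; 0, d] ∈ Matrix.unitaryGroup (Fin 2) ℂ := by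
    rw [Matrix.mem_unitaryGroup_iff]
    ext i j
    fin_cases i <;> fin_cases j <;>
      simp [Matrix.star_eq_conjTranspose, Matrix.mul_apply]
    exact hdd
  have hDh : (!![1, 0; 0, d])ᴴ = !![1, 0; 0, star d] := by
    ext i j
    fin_cases i <;> fin_cases j <;> simp
  have hconj (A : Matrix (Fin 2) (Fin 2) ℂ) :
      (V * !![1, 0; 0, d])ᴴ * A * (V * !![1, 0; 0, d])
        = !![1, 0; 0, star d] * (Vᴴ * A * V) * !![1, 0; 0, d] := by
    rw [Matrix.conjTranspose_mul, hDh]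
    simp only [mul_assoc]
  refine ⟨V * !![1, 0; 0, d], mul_mem hV hD, a, ‖w‖, hb, ?_, ?_⟩
  · rw [hconj, hVP, Zm]
    ext i j
    fin_cases i <;> fin_cases j <;> simp
    exact (mul_comm _ _).trans hdd
  · rw [hconj, hQ, Zm, Xm]
    ext i j
    fin_cases i <;> fin_cases j <;> simp
    · exact hwd
    · exact hdw
    · change star d * a * d = a
      linear_combination (a : ℂ) * hdd
end

section
/- Let S : Matrix (Fin 2 × Fin 2 × n₃) (Fin 2 × Fin 2 × n₃) ℂ and P : Matrix (Fin 2 × Fin 2 × n₄) (Fin 2 × Fin 2 × n₄) ℂ, with commuting embeddings S̃ * P̃ = P̃ * S̃ on the four-factor system. Assume: (i) the induced algebra of S on the first qubit equals StarSubalgebra.adjoin ℂ {Z}; (ii) the induced algebra of S on the second qubit equals StarSubalgebra.adjoin ℂ {Z}; (iii) the induced algebra of P on the first qubit equals StarSubalgebra.adjoin ℂ {P₁} for some Pauli operator P₁ with Z * P₁ ≠ P₁ * Z; (iv) the induced algebra of P on the second qubit is not contained in Submodule.span ℂ {1, Z}, i.e. some generator b_γ of it satisfies Z * b_γ ≠ b_γ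 * Z. Then the induced algebra of S on the pair of qubits equals StarSubalgebra.adjoin ℂ {Z ⊗ₖ Z}, and P₁ anticommutes with Z: Z * P₁ = -(P₁ * Z). -/
/-! Write `S̃ = ∑ g ⊗ E ⊗ 1` and `P̃ = ∑ h ⊗ 1 ⊗ E'` over matrix units `E`, `E'` of the two
auxiliary factors: `S̃` and `P̃` commute iff every two-qubit slice `g` of `S` commutes with every
slice `h` of `P`. As `S` induces `⟨Z⟩` on either qubit, each `g` is diagonal, with entries `g i j`,
so a nonzero entry of some `h` between `(i, j)` and `(i', j')` forces `g i j = g i' j'` for all `g`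
(`block_eq`).

Now `P = 1 ⊗ X + P₁ ⊗ Y` with `Y ≠ 0` (`first_decomp`), and `P₁`, being a Pauli operator that does
not commute with `Z`, has nonzero off-diagonal entries.

* If `Y` had no entry off-diagonal in the second qubit, it would have a diagonal one, giving
  `g 0 j = g 1 j` for some `j`; `X` would have an off-diagonal one, giving `g 0 0 = g 0 1` and
  `g 1 0 = g 1 1`. All `g` would be scalar, which contradicts that `S` induces `⟨Z⟩`.
* So `Y` has an off-diagonal entry, whence `g 0 0 = g 1 1` and `g 0 1 = g 1 0`: each `g` lies in
  `span {1, Z ⊗ Z}`, and not all are scalar, which identifies the induced algebra (`pair_eq`).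
* If the diagonal entries `±p` of `P₁` were nonzero, then at the position of that entry of `Y` one
  of `X + p Y`, `X - p Y` would be nonzero, giving `g 0 0 = g 0 1` or `g 1 0 = g 1 1` and again only
  scalar `g`. Hence `p = 0`, which is anticommutation with `Z`.
-/

open Matrix Kronecker

/-- The embedding `S̃` of an operator `S` acting on qubits 1, 2 and the factor `n₃`
into the four-factor system (acting as the identity on `n₄`). -/
def embS {n₃ n₄ : Type*} [DecidableEq n₄]
    (S : Matrix (Fin 2 × Fin 2 × n₃) (Fin 2 × Fin 2 × n₃) ℂ) :
    Matrix (Fin 2 × Fin 2 × n₃ × n₄) (Fin 2 × Fin 2 × n₃ × n₄) ℂ :=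
  fun x y => S (x.1, x.2.1, x.2.2.1) (y.1, y.2.1, y.2.2.1) *
    (if x.2.2.2 = y.2.2.2 then 1 else 0)

/-- The embedding `P̃` of an operator `P` acting on qubits 1, 2 and the factor `n₄`
into the four-factor system (acting as the identity on `n₃`). -/
def embP {n₃ n₄ : Type*} [DecidableEq n₃]
    (P : Matrix (Fin 2 × Fin 2 × n₄) (Fin 2 × Fin 2 × n₄) ℂ) :
    Matrix (Fin 2 × Fin 2 × n₃ × n₄) (Fin 2 × Fin 2 × n₃ × n₄) ℂ :=
  fun x y => P (x.1, x.2.1, x.2.2.2) (y.1, y.2.1, y.2.2.2) *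
    (if x.2.2.1 = y.2.2.1 then 1 else 0)

/-- `A` is the algebra induced by `S` on the first qubit: for some (equivalently,
any) decomposition `S = ∑_β a_β ⊗ e_β` with `(e_β)` linearly independent over `ℂ`,
`A` is the star subalgebra generated by the `a_β`. -/
def IsInducedFirst {n : Type*} [Fintype n]
    (S : Matrix (Fin 2 × Fin 2 × n) (Fin 2 × Fin 2 × n) ℂ)
    (A : StarSubalgebra ℂ (Matrix (Fin 2) (Fin 2) ℂ)) : Prop :=
  ∃ (s : Finset ℕ) (a : ℕ → Matrix (Fin 2) (Fin 2) ℂ)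
    (e : ℕ → Matrix (Fin 2 × n) (Fin 2 × n) ℂ),
    (∀ (i i' j j' : Fin 2) (k k' : n),
      S (i, j, k) (i', j', k') = ∑ β ∈ s, a β i i' * e β (j, k) (j', k')) ∧
    LinearIndependent ℂ (fun β : s => e β) ∧
    StarAlgebra.adjoin ℂ (a '' ↑s) = A

/-- `A` is the algebra induced by `S` on the second qubit: for some (equivalently,
any) decomposition `S = ∑_γ b_γ ⊗ f_γ` with `(f_γ)` linearly independent over `ℂ`,
`A` is the star subalgebra generated by the `b_γ`. -/
def IsInducedSecond {n : Type*} [Fintype n]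
    (S : Matrix (Fin 2 × Fin 2 × n) (Fin 2 × Fin 2 × n) ℂ)
    (A : StarSubalgebra ℂ (Matrix (Fin 2) (Fin 2) ℂ)) : Prop :=
  ∃ (s : Finset ℕ) (b : ℕ → Matrix (Fin 2) (Fin 2) ℂ)
    (f : ℕ → Matrix (Fin 2 × n) (Fin 2 × n) ℂ),
    (∀ (i i' j j' : Fin 2) (k k' : n),
      S (i, j, k) (i', j', k') = ∑ γ ∈ s, b γ j j' * f γ (i, k) (i', k')) ∧
    LinearIndependent ℂ (fun γ : s => f γ) ∧
    StarAlgebra.adjoin ℂ (b '' ↑s) = A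

/-- `A` is the algebra induced by `S` on the pair of qubits: for some (equivalently,
any) decomposition `S = ∑_α g_α ⊗ₖ c_α` with `(c_α)` linearly independent over `ℂ`,
`A` is the star subalgebra generated by the `g_α`. -/
def IsInducedPair {n : Type*} [Fintype n]
    (S : Matrix (Fin 2 × Fin 2 × n) (Fin 2 × Fin 2 × n) ℂ)
    (A : StarSubalgebra ℂ (Matrix (Fin 2 × Fin 2) (Fin 2 × Fin 2) ℂ)) : Prop :=
  ∃ (s : Finset ℕ) (g : ℕ → Matrix (Fin 2 × Fin 2) (Fin 2 × Fin 2) ℂ)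
    (c : ℕ → Matrix n n ℂ),
    (∀ (i i' j j' : Fin 2) (k k' : n),
      S (i, j, k) (i', j', k') = ∑ α ∈ s, g α (i, j) (i', j') * c α k k') ∧
    LinearIndependent ℂ (fun α : s => c α) ∧
    StarAlgebra.adjoin ℂ (g '' ↑s) = A

/-! ### Linear independence and generated star algebras -/

/-- A relation `∑ w β • e β = 0`, given entrywise, between linearly independent matrices is
trivial. -/
lemma coeff_eq_zero {X Y : Type*} {s : Finset ℕ} {e : ℕ → Matrix X Y ℂ}
    (he : LinearIndependent ℂ (fun β : s => e β)) (w : ℕ → ℂ)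
    (h : ∀ x y, ∑ β ∈ s, w β * e β x y = 0) : ∀ β ∈ s, w β = 0 := by
  have := linearIndepOn_finset_iff.mp (show LinearIndepOn ℂ e (s : Set ℕ) from he) w
  refine this ?_
  ext x y
  simpa [Matrix.sum_apply] using h x y

/-- The star algebra generated by a self-adjoint involution `Q` is `span {1, Q}`. -/
lemma mem_adjoin_involution {Q x : Matrix (Fin 2) (Fin 2) ℂ} (hh : Qᴴ = Q) (hu : Q * Q = 1)
    (hx : x ∈ StarAlgebra.adjoin ℂ {Q}) : ∃ u v : ℂ, x = u • 1 + v • Q := by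
  induction hx using StarAlgebra.adjoin_induction with
  | mem x hx => exact ⟨0, 1, by simpa using hx⟩
  | algebraMap r => exact ⟨r, 0, by simp [Algebra.algebraMap_eq_smul_one]⟩
  | add x y _ _ h₁ h₂ =>
    obtain ⟨u, v, rfl⟩ := h₁
    obtain ⟨u', v', rfl⟩ := h₂
    exact ⟨u + u', v + v', by module⟩
  | mul x y _ _ h₁ h₂ =>
    obtain ⟨u, v, rfl⟩ := h₁
    obtain ⟨u', v', rfl⟩ := h₂
    refine ⟨u * u' + v * v', u * v' + v * u', ?_⟩
    simp only [add_mul, mul_add, smul_mul_smul_comm, hu, one_mul, mul_one]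
    module
  | star x _ h =>
    obtain ⟨u, v, rfl⟩ := h
    exact ⟨star u, star v, by simp [star_eq_conjTranspose, hh]⟩

lemma mem_adjoin_scalar {T : Set (Matrix (Fin 2) (Fin 2) ℂ)} {x : Matrix (Fin 2) (Fin 2) ℂ}
    (hT : ∀ t ∈ T, ∃ u : ℂ, t = u • 1)
    (hx : x ∈ StarAlgebra.adjoin ℂ T) : ∃ u : ℂ, x = u • 1 := by
  have h : StarAlgebra.adjoin ℂ T ≤ ⊥ := StarAlgebra.adjoin_le fun t ht => by
    obtain ⟨u, rfl⟩ := hT t ht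
    exact StarSubalgebra.mem_bot.2 ⟨u, Algebra.algebraMap_eq_smul_one u⟩
  obtain ⟨u, rfl⟩ := StarSubalgebra.mem_bot.1 (h hx)
  exact ⟨u, Algebra.algebraMap_eq_smul_one u⟩

lemma Zm_conjTranspose : Zmᴴ = Zm := by
  ext i j; fin_cases i <;> fin_cases j <;> simp [Zm]

lemma Zm_mul_self : Zm * Zm = 1 := by
  ext i j; fin_cases i <;> fin_cases j <;> simp [Zm]

lemma Zm_offDiag {i i' : Fin 2} (hi : i ≠ i') : Zm i i' = 0 := by
  fin_cases i <;> fin_cases i' <;> simp_all [Zm]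

lemma offDiag_of_mem_adjoin_Zm {x : Matrix (Fin 2) (Fin 2) ℂ}
    (hx : x ∈ StarAlgebra.adjoin ℂ {Zm}) {i i' : Fin 2} (hi : i ≠ i') : x i i' = 0 := by
  obtain ⟨u, v, rfl⟩ := mem_adjoin_involution Zm_conjTranspose Zm_mul_self hx
  simp [Zm_offDiag hi, hi]

lemma offDiag_of_mem_adjoin {T : Set (Matrix (Fin 2) (Fin 2) ℂ)} {x : Matrix (Fin 2) (Fin 2) ℂ}
    (hT : ∀ t ∈ T, t 0 1 = 0 ∧ t 1 0 = 0)
    (hx : x ∈ StarAlgebra.adjoin ℂ T) : x 0 1 = 0 ∧ x 1 0 = 0 := by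
  induction hx using StarAlgebra.adjoin_induction with
  | mem x hx => exact hT x hx
  | algebraMap r => simp [Algebra.algebraMap_eq_smul_one]
  | add x y _ _ h₁ h₂ => simp [h₁, h₂]
  | mul x y _ _ h₁ h₂ => simp [Matrix.mul_apply, h₁, h₂]
  | star x _ h => simp [h]

/-! ### Reading off an operator from its induced algebras -/

section

variable {n : Type*} [Fintype n]

lemma first_offDiag {S : Matrix (Fin 2 × Fin 2 × n) (Fin 2 × Fin 2 × n) ℂ}
    (h : IsInducedFirst S (StarAlgebra.adjoin ℂ {Zm})) {i i' : Fin 2} (hi : i ≠ i')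
    (j j' : Fin 2) (k k' : n) : S (i, j, k) (i', j', k') = 0 := by
  obtain ⟨s, a, e, hS, -, hA⟩ := h
  rw [hS]
  refine Finset.sum_eq_zero fun β hβ => ?_
  have hmem : a β ∈ StarAlgebra.adjoin ℂ {Zm} := hA ▸ StarAlgebra.subset_adjoin ℂ _ ⟨β, hβ, rfl⟩
  rw [offDiag_of_mem_adjoin_Zm hmem hi, zero_mul]

lemma second_offDiag {S : Matrix (Fin 2 × Fin 2 × n) (Fin 2 × Fin 2 × n) ℂ}
    (h : IsInducedSecond S (StarAlgebra.adjoin ℂ {Zm})) (i i' : Fin 2) {j j' : Fin 2}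
    (hj : j ≠ j') (k k' : n) : S (i, j, k) (i', j', k') = 0 := by
  obtain ⟨s, a, e, hS, -, hA⟩ := h
  rw [hS]
  refine Finset.sum_eq_zero fun β hβ => ?_
  have hmem : a β ∈ StarAlgebra.adjoin ℂ {Zm} := hA ▸ StarAlgebra.subset_adjoin ℂ _ ⟨β, hβ, rfl⟩
  rw [offDiag_of_mem_adjoin_Zm hmem hj, zero_mul]

/-- If `S` induces `⟨Z⟩` on the first qubit, its two diagonal blocks for that qubit differ. -/
lemma first_nonscalar {S : Matrix (Fin 2 × Fin 2 × n) (Fin 2 × Fin 2 × n) ℂ}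
    (h : IsInducedFirst S (StarAlgebra.adjoin ℂ {Zm})) :
    ∃ (j j' : Fin 2) (k k' : n), S (0, j, k) (0, j', k') ≠ S (1, j, k) (1, j', k') := by
  by_contra! hc
  obtain ⟨s, a, e, hS, he, hA⟩ := h
  have h0 := coeff_eq_zero he (fun β => a β 0 0 - a β 1 1) (by
    rintro ⟨j, k⟩ ⟨j', k'⟩
    have := hc j j' k k'
    rw [hS, hS, ← sub_eq_zero, ← Finset.sum_sub_distrib] at this
    simpa only [sub_mul] using this)
  obtain ⟨u, hu⟩ := mem_adjoin_scalar (T := a '' ↑s) (x := Zm) (by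
    rintro _ ⟨β, hβ, rfl⟩
    have hmem : a β ∈ StarAlgebra.adjoin ℂ {Zm} :=
      hA ▸ StarAlgebra.subset_adjoin ℂ _ ⟨β, hβ, rfl⟩
    refine ⟨a β 0 0, ?_⟩
    ext i i'
    fin_cases i <;> fin_cases i'
    · simp
    · simpa using offDiag_of_mem_adjoin_Zm hmem (by decide : (0 : Fin 2) ≠ 1)
    · simpa using offDiag_of_mem_adjoin_Zm hmem (by decide : (1 : Fin 2) ≠ 0)
    · simpa using (sub_eq_zero.mp (h0 β hβ)).symm)
    (hA ▸ StarAlgebra.subset_adjoin ℂ _ rfl)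
  have e0 := congr_fun (congr_fun hu 0) 0
  have e1 := congr_fun (congr_fun hu 1) 1
  simp [Zm] at e0 e1
  rw [← e0] at e1
  norm_num at e1

/-- An operator inducing `⟨Q⟩` on the first qubit, for `Q` a non-scalar self-adjoint involution,
has the form `1 ⊗ X + Q ⊗ Y` with `Y ≠ 0`. -/
lemma first_decomp {P : Matrix (Fin 2 × Fin 2 × n) (Fin 2 × Fin 2 × n) ℂ}
    {Q : Matrix (Fin 2) (Fin 2) ℂ} (hh : Qᴴ = Q) (hu : Q * Q = 1) (hQ : ¬ ∃ u : ℂ, Q = u • 1)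
    (h : IsInducedFirst P (StarAlgebra.adjoin ℂ {Q})) :
    ∃ X Y : Matrix (Fin 2 × n) (Fin 2 × n) ℂ, Y ≠ 0 ∧
      ∀ (i i' j j' : Fin 2) (l l' : n), P (i, j, l) (i', j', l') =
        (1 : Matrix (Fin 2) (Fin 2) ℂ) i i' * X (j, l) (j', l') + Q i i' * Y (j, l) (j', l') := by
  obtain ⟨s, a, e, hP, he, hA⟩ := h
  have hex : ∀ β, ∃ u v : ℂ, β ∈ s → a β = u • 1 + v • Q := fun β => by
    by_cases hβ : β ∈ s
    · obtain ⟨u, v, h⟩ := mem_adjoin_involution hh hu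
        (hA ▸ StarAlgebra.subset_adjoin ℂ _ ⟨β, hβ, rfl⟩ : a β ∈ StarAlgebra.adjoin ℂ {Q})
      exact ⟨u, v, fun _ => h⟩
    · exact ⟨0, 0, fun h => absurd h hβ⟩
  choose u v huv using hex
  refine ⟨∑ β ∈ s, u β • e β, ∑ β ∈ s, v β • e β, fun hY => hQ ?_, fun i i' j j' l l' => ?_⟩
  · have h0 := coeff_eq_zero he v fun x y => by
      simpa [Matrix.sum_apply] using congr_fun (congr_fun hY x) y
    refine mem_adjoin_scalar (T := a '' ↑s) ?_ (hA ▸ StarAlgebra.subset_adjoin ℂ _ rfl)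
    rintro _ ⟨β, hβ, rfl⟩
    exact ⟨u β, by simp [huv β hβ, h0 β hβ]⟩
  · rw [hP, Matrix.sum_apply, Matrix.sum_apply, Finset.mul_sum, Finset.mul_sum,
      ← Finset.sum_add_distrib]
    refine Finset.sum_congr rfl fun β hβ => ?_
    simp only [huv β hβ, Matrix.add_apply, Matrix.smul_apply, smul_eq_mul]
    ring

lemma second_offDiag_ne {P : Matrix (Fin 2 × Fin 2 × n) (Fin 2 × Fin 2 × n) ℂ}
    {A : StarSubalgebra ℂ (Matrix (Fin 2) (Fin 2) ℂ)} (h : IsInducedSecond P A)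
    (hA : ¬ ∀ x ∈ A, x ∈ Submodule.span ℂ ({1, Zm} : Set (Matrix (Fin 2) (Fin 2) ℂ))) :
    ∃ (i i' j j' : Fin 2) (l l' : n), j ≠ j' ∧ P (i, j, l) (i', j', l') ≠ 0 := by
  by_contra! hc
  obtain ⟨s, b, f, hP, hf, rfl⟩ := h
  refine hA fun x hx => ?_
  have hb : ∀ j j', j ≠ j' → ∀ γ ∈ s, b γ j j' = 0 := fun j j' hj =>
    coeff_eq_zero hf (fun γ => b γ j j') (by
      rintro ⟨i, l⟩ ⟨i', l'⟩
      rw [← hP]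
      exact hc i i' j j' l l' hj)
  obtain ⟨h01, h10⟩ := offDiag_of_mem_adjoin (by
    rintro _ ⟨γ, hγ, rfl⟩
    exact ⟨hb 0 1 (by decide) γ hγ, hb 1 0 (by decide) γ hγ⟩) hx
  refine Submodule.mem_span_pair.2 ⟨(x 0 0 + x 1 1) / 2, (x 0 0 - x 1 1) / 2, ?_⟩
  ext i j
  fin_cases i <;> fin_cases j <;> simp [Zm, h01, h10] <;> ring

/-- If `S` is diagonal on the two qubits with both blocks `00`, `11` equal and both blocks `01`,
`10` equal, but not all four equal, then the algebra it induces on the pair is `⟨Z ⊗ Z⟩`. -/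
lemma pair_eq {S : Matrix (Fin 2 × Fin 2 × n) (Fin 2 × Fin 2 × n) ℂ}
    (h1 : ∀ (i i' j j' : Fin 2) (k k' : n), (i, j) ≠ (i', j') → S (i, j, k) (i', j', k') = 0)
    (h2 : ∀ k k', S (0, 0, k) (0, 0, k') = S (1, 1, k) (1, 1, k'))
    (h3 : ∀ k k', S (0, 1, k) (0, 1, k') = S (1, 0, k) (1, 0, k'))
    (h4 : ∃ k k', S (0, 0, k) (0, 0, k') ≠ S (0, 1, k) (0, 1, k'))
    {A : StarSubalgebra ℂ (Matrix (Fin 2 × Fin 2) (Fin 2 × Fin 2) ℂ)}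
    (h : IsInducedPair S A) : A = StarAlgebra.adjoin ℂ {Zm ⊗ₖ Zm} := by
  obtain ⟨s, g, c, hS, hc, rfl⟩ := h
  have g1 : ∀ p p', p ≠ p' → ∀ α ∈ s, g α p p' = 0 := fun p p' hp =>
    coeff_eq_zero hc (fun α => g α p p') fun k k' => by
      rw [← hS p.1 p'.1 p.2 p'.2]
      exact h1 _ _ _ _ _ _ hp
  have gd : ∀ i j i' j' : Fin 2, (∀ k k', S (i, j, k) (i, j, k') = S (i', j', k) (i', j', k')) →
      ∀ α ∈ s, g α (i, j) (i, j) = g α (i', j') (i', j') := fun i j i' j' h α hα =>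
    sub_eq_zero.mp (coeff_eq_zero hc (fun α => g α (i, j) (i, j) - g α (i', j') (i', j'))
      (fun k k' => by
        have := h k k'
        rw [hS, hS, ← sub_eq_zero, ← Finset.sum_sub_distrib] at this
        simpa only [sub_mul] using this) α hα)
  have hg : ∀ α ∈ s, g α = ((g α (0, 0) (0, 0) + g α (0, 1) (0, 1)) / 2) • 1 +
      ((g α (0, 0) (0, 0) - g α (0, 1) (0, 1)) / 2) • (Zm ⊗ₖ Zm) := fun α hα => by
    have e2 := gd 0 0 1 1 h2 α hα
    have e3 := gd 0 1 1 0 h3 α hα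
    ext p p'
    by_cases hp : p = p'
    · subst hp
      obtain ⟨i, j⟩ := p
      fin_cases i <;> fin_cases j <;> simp [Zm, ← e2, ← e3] <;> ring
    · rw [g1 p p' hp α hα]
      obtain ⟨i, j⟩ := p
      obtain ⟨i', j'⟩ := p'
      have hZ : Zm i i' * Zm j j' = 0 := by
        by_cases hi : i = i'
        · rw [Zm_offDiag (fun hj : j = j' => hp (by rw [hi, hj])), mul_zero]
        · rw [Zm_offDiag hi, zero_mul]
      simp [Matrix.one_apply_ne hp, hZ]
  apply le_antisymm
  · refine StarAlgebra.adjoin_le ?_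
    rintro _ ⟨α, hα, rfl⟩
    rw [SetLike.mem_coe, hg α hα]
    exact add_mem (SMulMemClass.smul_mem _ (one_mem _))
      (SMulMemClass.smul_mem _ (StarAlgebra.subset_adjoin ℂ _ rfl))
  · obtain ⟨α, hα, hne⟩ : ∃ α ∈ s, g α (0, 0) (0, 0) ≠ g α (0, 1) (0, 1) := by
      by_contra! hall
      obtain ⟨k, k', hk⟩ := h4
      refine hk ?_
      rw [hS, hS]
      exact Finset.sum_congr rfl fun α hα => by rw [hall α hα]
    refine StarAlgebra.adjoin_le ?_
    rintro _ rfl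
    have hne' : (g α (0, 0) (0, 0) - g α (0, 1) (0, 1)) / 2 ≠ 0 :=
      div_ne_zero (sub_ne_zero.2 hne) two_ne_zero
    have hZ : Zm ⊗ₖ Zm = ((g α (0, 0) (0, 0) - g α (0, 1) (0, 1)) / 2)⁻¹ •
        (g α - ((g α (0, 0) (0, 0) + g α (0, 1) (0, 1)) / 2) • 1) := by
      rw [eq_inv_smul_iff₀ hne', eq_sub_iff_add_eq, add_comm]
      exact (hg α hα).symm
    rw [SetLike.mem_coe, hZ]
    exact SMulMemClass.smul_mem _ (sub_mem (StarAlgebra.subset_adjoin ℂ _ ⟨α, hα, rfl⟩)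
      (SMulMemClass.smul_mem _ (one_mem _)))

end

/-! ### Commutation of the embeddings -/

/-- When `S` is diagonal on the two qubits, a nonzero entry of `P` between two qubit basis states
forces the corresponding diagonal blocks of `S` to agree, since `S̃` and `P̃` commute. -/
lemma block_eq {n₃ n₄ : Type*} [Fintype n₃] [Fintype n₄] [DecidableEq n₃] [DecidableEq n₄]
    {S : Matrix (Fin 2 × Fin 2 × n₃) (Fin 2 × Fin 2 × n₃) ℂ}
    {P : Matrix (Fin 2 × Fin 2 × n₄) (Fin 2 × Fin 2 × n₄) ℂ}
    (hcomm : embS (n₄ := n₄) S * embP (n₃ := n₃) P = embP (n₃ := n₃) P * embS (n₄ := n₄) S)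
    (h1 : ∀ (i i' j j' : Fin 2) (k k' : n₃), (i, j) ≠ (i', j') → S (i, j, k) (i', j', k') = 0)
    {i i' j j' : Fin 2} {l l' : n₄} (hP : P (i, j, l) (i', j', l') ≠ 0) (k k' : n₃) :
    S (i, j, k) (i, j, k') = S (i', j', k) (i', j', k') := by
  have h := congr_fun (congr_fun hcomm (i, j, k, l)) (i', j', k', l')
  simp only [Matrix.mul_apply, embS, embP, Fintype.sum_prod_type, mul_ite, ite_mul, mul_one,
    mul_zero, zero_mul, Finset.sum_ite_irrel, Finset.sum_const_zero,
    Finset.sum_ite_eq, Finset.sum_ite_eq', Finset.mem_univ, if_true] at h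
  have hL : ∀ (F : Fin 2 → Fin 2 → ℂ),
      ∑ x, ∑ y, S (i, j, k) (x, y, k') * F x y = S (i, j, k) (i, j, k') * F i j := fun F => by
    rw [← Fintype.sum_prod_type' (fun x y => S (i, j, k) (x, y, k') * F x y)]
    refine Fintype.sum_eq_single (i, j) fun p hp => ?_
    rw [h1 _ _ _ _ _ _ (Ne.symm hp), zero_mul]
  have hR : ∀ (F : Fin 2 → Fin 2 → ℂ),
      ∑ x, ∑ y, F x y * S (x, y, k) (i', j', k') = F i' j' * S (i', j', k) (i', j', k') :=
    fun F => by
    rw [← Fintype.sum_prod_type' (fun x y => F x y * S (x, y, k) (i', j', k'))]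
    refine Fintype.sum_eq_single (i', j') fun p hp => ?_
    rw [h1 _ _ _ _ _ _ hp, mul_zero]
  rw [hL (fun x y => P (x, y, l) (i', j', l')), hR (fun x y => P (i, j, l) (x, y, l'))] at h
  rw [mul_comm] at h
  exact mul_left_cancel₀ hP h

/-! ### The two-qubit lemma -/

/-- (Part of Lemma on induced algebras on two qubits.)
If the commuting operators `S̃, P̃` are such that `S` induces `⟨Z⟩` on each of the
two qubits, `P` induces `⟨P₁⟩` on the first qubit for a Pauli `P₁` not commuting
with `Z`, and the algebra induced by `P` on the second qubit is not contained in
`span{1, Z}`, then `S` induces `⟨Z ⊗ₖ Z⟩` on the pair of qubits and `P₁`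
anticommutes with `Z`. -/
theorem induced_pair_eq_ZZ
    {n₃ n₄ : Type*} [Fintype n₃] [Fintype n₄]
    [DecidableEq n₃] [DecidableEq n₄] [Nonempty n₃] [Nonempty n₄]
    (S : Matrix (Fin 2 × Fin 2 × n₃) (Fin 2 × Fin 2 × n₃) ℂ)
    (P : Matrix (Fin 2 × Fin 2 × n₄) (Fin 2 × Fin 2 × n₄) ℂ)
    (hcomm : embS (n₄ := n₄) S * embP (n₃ := n₃) P
      = embP (n₃ := n₃) P * embS (n₄ := n₄) S)
    (hS1 : IsInducedFirst S (StarAlgebra.adjoin ℂ {Zm}))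
    (hS2 : IsInducedSecond S (StarAlgebra.adjoin ℂ {Zm}))
    (P₁ : Matrix (Fin 2) (Fin 2) ℂ)
    (hP₁h : P₁ᴴ = P₁) (hP₁u : P₁ᴴ * P₁ = 1) (hP₁t : Matrix.trace P₁ = 0)
    (hP₁Z : Zm * P₁ ≠ P₁ * Zm)
    (hP1 : IsInducedFirst P (StarAlgebra.adjoin ℂ {P₁}))
    (AP₂ : StarSubalgebra ℂ (Matrix (Fin 2) (Fin 2) ℂ))
    (hP2 : IsInducedSecond P AP₂)
    (hP2n : ¬ ∀ x ∈ AP₂,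
      x ∈ Submodule.span ℂ ({1, Zm} : Set (Matrix (Fin 2) (Fin 2) ℂ))) :
    (∀ A₁₂, IsInducedPair S A₁₂ → A₁₂ = StarAlgebra.adjoin ℂ {Zm ⊗ₖ Zm}) ∧
      Zm * P₁ = -(P₁ * Zm) := by
  have hS0 : ∀ (i i' j j' : Fin 2) (k k' : n₃), (i, j) ≠ (i', j') →
      S (i, j, k) (i', j', k') = 0 := fun i i' j j' k k' hne => by
    by_cases hi : i = i'
    · exact second_offDiag hS2 i i' (fun hj => hne (by rw [hi, hj])) k k'
    · exact first_offDiag hS1 hi j j' k k'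
  have hinv : P₁ * P₁ = 1 := by rwa [hP₁h] at hP₁u
  have h11 : P₁ 1 1 = -P₁ 0 0 := by
    rw [Matrix.trace_fin_two] at hP₁t
    linear_combination hP₁t
  have h10 : P₁ 1 0 = star (P₁ 0 1) := (congr_fun (congr_fun hP₁h 1) 0).symm
  have hq : P₁ 0 1 ≠ 0 := fun hq => hP₁Z <| by
    rw [hq, star_zero] at h10
    ext i j
    fin_cases i <;> fin_cases j <;> simp [Zm, Matrix.mul_apply, hq, h10]
  have hq' : P₁ 1 0 ≠ 0 := by rw [h10]; exact star_ne_zero.2 hq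
  have hns : ¬ ∃ u : ℂ, P₁ = u • 1 := by
    rintro ⟨u, rfl⟩
    simp at hq
  obtain ⟨X, Y, hY0, hP⟩ := first_decomp hP₁h hinv hns hP1
  -- `D i j` is the diagonal block of `S` at the qubit basis state `(i, j)`.
  set D : Fin 2 → Fin 2 → n₃ → n₃ → ℂ := fun i j k k' => S (i, j, k) (i, j, k') with hD
  have hblk : ∀ {i i' j j' : Fin 2} {l l' : n₄}, P (i, j, l) (i', j', l') ≠ 0 →
      D i j = D i' j' := fun h => by
    funext k k'
    exact block_eq hcomm hS0 h k k'
  have hnsc : ¬ (D 0 0 = D 1 0 ∧ D 0 1 = D 1 1) := by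
    rintro ⟨h0, h1⟩
    obtain ⟨j, j', k, k', hne⟩ := first_nonscalar hS1
    by_cases hj : j = j'
    · subst hj
      fin_cases j
      · exact hne (congr_fun (congr_fun h0 k) k')
      · exact hne (congr_fun (congr_fun h1 k) k')
    · refine hne ?_
      rw [hS0 _ _ _ _ _ _ (by simpa using hj), hS0 _ _ _ _ _ _ (by simpa using hj)]
  have hYD : ∀ {j j' : Fin 2} {l l' : n₄}, Y (j, l) (j', l') ≠ 0 →
      D 0 j = D 1 j' ∧ D 1 j = D 0 j' := fun {j j' l l'} h =>
    ⟨hblk (l := l) (l' := l') (by simpa [hP] using ⟨hq, h⟩),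
      hblk (l := l) (l' := l') (by simpa [hP] using ⟨hq', h⟩)⟩
  have htwo : ∀ j j' : Fin 2, j ≠ j' → (j = 0 ∧ j' = 1) ∨ (j = 1 ∧ j' = 0) := by decide
  obtain ⟨j, j', l, l', hj, hY⟩ : ∃ (j j' : Fin 2) (l l' : n₄), j ≠ j' ∧
      Y (j, l) (j', l') ≠ 0 := by
    by_contra! hc
    obtain ⟨j, l, j', l', hY⟩ : ∃ (j : Fin 2) (l : n₄) (j' : Fin 2) (l' : n₄),
        Y (j, l) (j', l') ≠ 0 := by
      by_contra! h
      exact hY0 (by ext ⟨j, l⟩ ⟨j', l'⟩; exact h j l j' l')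
    obtain rfl : j = j' := by
      by_contra hj
      exact hY (hc j j' l l' hj)
    have hd := (hYD hY).1
    obtain ⟨i, i', m, m', r, r', hm, hPne⟩ := second_offDiag_ne hP2 hP2n
    have hX : X (m, r) (m', r') ≠ 0 := fun h => hPne (by rw [hP, h, hc m m' r r' hm]; simp)
    have hx : ∀ x, D x m = D x m' := fun x =>
      hblk (l := r) (l' := r') (by rw [hP, hc m m' r r' hm]; simpa using hX)
    have hx' : ∀ x, D x 0 = D x 1 := fun x => by
      have h := hx x
      rcases htwo m m' hm with ⟨rfl, rfl⟩ | ⟨rfl, rfl⟩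
      · exact h
      · exact h.symm
    refine hnsc ?_
    fin_cases j
    · exact ⟨hd, by rw [← hx', ← hx']; exact hd⟩
    · exact ⟨by rw [hx', hx']; exact hd, hd⟩
  have hA : D 0 0 = D 1 1 ∧ D 0 1 = D 1 0 := by
    have h := hYD hY
    rcases htwo j j' hj with ⟨rfl, rfl⟩ | ⟨rfl, rfl⟩
    · exact ⟨h.1, h.2.symm⟩
    · exact ⟨h.2.symm, h.1⟩
  have hne : D 0 0 ≠ D 0 1 := fun h => hnsc ⟨h.trans hA.2, h.symm.trans hA.1⟩
  have hp : P₁ 0 0 = 0 := by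
    by_contra hp
    have hcase : D 0 j = D 0 j' ∨ D 1 j = D 1 j' := by
      by_contra! hcon
      have e0 : P (0, j, l) (0, j', l') = 0 := by
        by_contra h
        exact hcon.1 (hblk h)
      have e1 : P (1, j, l) (1, j', l') = 0 := by
        by_contra h
        exact hcon.2 (hblk h)
      simp only [hP, Matrix.one_apply_eq, one_mul, h11] at e0 e1
      exact mul_ne_zero hp hY (by linear_combination (e0 - e1) / 2)
    have hcase' : D 0 0 = D 0 1 ∨ D 1 0 = D 1 1 := by
      rcases htwo j j' hj with ⟨rfl, rfl⟩ | ⟨rfl, rfl⟩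
      · exact hcase
      · exact hcase.imp Eq.symm Eq.symm
    rcases hcase' with h | h
    · exact hne h
    · exact hne (by rw [hA.1, hA.2, h])
  refine ⟨fun A₁₂ hA₁₂ => pair_eq hS0 (fun k k' => congr_fun (congr_fun hA.1 k) k')
    (fun k k' => congr_fun (congr_fun hA.2 k) k') ?_ hA₁₂, ?_⟩
  · by_contra! h
    exact hne (by funext k k'; exact h k k')
  · rw [hp, neg_zero] at h11
    ext i j
    fin_cases i <;> fin_cases j <;> simp [Zm, Matrix.mul_apply, hp, h11]
end

section
/- Let S : Matrix (Fin 2 × Fin 2 × n₃) (Fin 2 × Fin 2 × n₃) ℂ and P : Matrix (Fin 2 × Fin 2 × n₄) (Fin 2 × Fin 2 × n₄) ℂ, with commuting embeddings S̃ * P̃ = P̃ * S̃ on the four-factor system. Assume: (i) the induced algebra of S on the first qubit and on the second qubit each equal StarSubalgebra.adjoin ℂ {Z}; (ii) the induced algebra of P on the first qubit equals StarSubalgebra.adjoin ℂ {P₁} for a Pauli operator P₁ with Z * P₁ ≠ P₁ * Z; (iii) the induced algebra of P on the second qubit equals StarSubalgebra.adjoin ℂ {P₂} for a Pauli operator P₂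 with Z * P₂ ≠ P₂ * Z. Then P₁ and P₂ both anticommute with Z (Z * P₁ = -(P₁ * Z) and Z * P₂ = -(P₂ * Z)), and the induced algebra of P on the pair of qubits equals StarSubalgebra.adjoin ℂ {P₁ ⊗ₖ P₂}. -/
/-!
The commutation of `S̃` with `P̃` says that every `4 × 4` slice of `S` (an entry in the third factor)
commutes with every slice of `P`. Generators of `⟨Z⟩` are diagonal, so the slices of `S` are diagonal
in both qubits, and the commutation relation reads
`(S_{xx} - S_{yy}) P_{xy} = 0` for two-qubit basis indices `x, y` (`diag_comm`).

On the other side the slices of `P` are of the form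
`a + b (P₁ ⊗ 1) + c (1 ⊗ P₂) + d (P₁ ⊗ P₂)` (`exists_two_qubit_coeffs`).
Write `z₁, z₂` for the upper left entries of `P₁, P₂`; the off-diagonal entries are nonzero because
`P₁, P₂` do not commute with `Z`. The entries `P_{xy}` with `x, y` differing in both qubits are
multiples of `d`, those with `x, y` differing in one qubit only are multiples of `b ± d z₂`
and `c ± d z₁`. If `d = 0` in all slices, then some `b ≠ 0`, so the slices of `S` would not depend
on the first qubit. Hence some `d ≠ 0`, which forces `S₀₀ = S₁₁` and `S₀₁ = S₁₀` in every slice; as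
the slices of `S` depend on each qubit, `b ± d z₂ = 0 = c ± d z₁` for every slice of `P`. So
`b = c = 0` throughout and `z₁ = z₂ = 0`, which is anticommutation with `Z`, and the slices of `P`
are `a + d (P₁ ⊗ P₂)` with some `d ≠ 0`
(`slices_of_comm`). Linear independence of the `c_α` transfers this form to the
generators of the induced pair algebra (`pair_eq_adjoin`).
-/

open Matrix Kronecker

/-! ### Induced algebras generated by an involution -/

/-- The star algebra generated by a self-adjoint involution `Q` is the span of `1` and `Q`. -/
theorem mem_adjoin_involution_s13 {m : Type*} [Fintype m] [DecidableEq m] {Q : Matrix m m ℂ}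
    (hQ : Qᴴ = Q) (hQ2 : Q * Q = 1) {M : Matrix m m ℂ}
    (hM : M ∈ StarAlgebra.adjoin ℂ {Q}) : ∃ x y : ℂ, M = x • 1 + y • Q := by
  induction hM using StarAlgebra.adjoin_induction with
  | mem M h =>
    obtain rfl : M = Q := h
    exact ⟨0, 1, by simp⟩
  | algebraMap r => exact ⟨r, 0, by simp [Algebra.algebraMap_eq_smul_one]⟩
  | add M N _ _ h1 h2 =>
    obtain ⟨x, y, rfl⟩ := h1
    obtain ⟨x', y', rfl⟩ := h2
    exact ⟨x + x', y + y', by module⟩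
  | mul M N _ _ h1 h2 =>
    obtain ⟨x, y, rfl⟩ := h1
    obtain ⟨x', y', rfl⟩ := h2
    refine ⟨x * x' + y * y', x * y' + y * x', ?_⟩
    simp only [add_mul, mul_add, smul_mul_assoc, mul_smul_comm, hQ2, one_mul, mul_one]
    module
  | star M _ h =>
    obtain ⟨x, y, rfl⟩ := h
    refine ⟨star x, star y, ?_⟩
    rw [Matrix.star_eq_conjTranspose, Matrix.conjTranspose_add, Matrix.conjTranspose_smul,
      Matrix.conjTranspose_smul, hQ, Matrix.conjTranspose_one]

/-- Writing `S = 1 ⊗ u + Q ⊗ v`, the part `v` vanishes only if the induced algebra is scalar. -/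
theorem IsInducedFirst.exists_decomp {n : Type*} [Fintype n]
    {S : Matrix (Fin 2 × Fin 2 × n) (Fin 2 × Fin 2 × n) ℂ} {Q : Matrix (Fin 2) (Fin 2) ℂ}
    (hQ : Qᴴ = Q) (hQ2 : Q * Q = 1) (hQt : Q.trace = 0)
    (h : IsInducedFirst S (StarAlgebra.adjoin ℂ {Q})) :
    ∃ u v : Matrix (Fin 2 × n) (Fin 2 × n) ℂ, v ≠ 0 ∧ ∀ i i' j j' k k',
      S (i, j, k) (i', j', k') =
        u (j, k) (j', k') * (1 : Matrix (Fin 2) (Fin 2) ℂ) i i' + v (j, k) (j', k') * Q i i' := by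
  obtain ⟨s, a, e, hS, hli, hA⟩ := h
  have ha : ∀ β : s, ∃ x y : ℂ, a β = x • 1 + y • Q := fun β =>
    mem_adjoin_involution_s13 hQ hQ2 (hA ▸ StarAlgebra.subset_adjoin ℂ _ ⟨β, β.2, rfl⟩)
  choose x y hxy using ha
  refine ⟨∑ β, x β • e β, ∑ β, y β • e β, fun hv => ?_, fun i i' j j' k k' => ?_⟩
  · have hy := Fintype.linearIndependent_iff.1 hli y hv
    have hle : StarAlgebra.adjoin ℂ (a '' (s : Set ℕ)) ≤ ⊥ := by
      rw [StarAlgebra.adjoin_le_iff]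
      rintro _ ⟨β, hβ, rfl⟩
      rw [SetLike.mem_coe, StarSubalgebra.mem_bot]
      exact ⟨x ⟨β, hβ⟩, by
        rw [hxy ⟨β, hβ⟩, hy ⟨β, hβ⟩, Algebra.algebraMap_eq_smul_one, zero_smul, add_zero]⟩
    have hQm : Q ∈ (⊥ : StarSubalgebra ℂ (Matrix (Fin 2) (Fin 2) ℂ)) :=
      hle (hA ▸ StarAlgebra.self_mem_adjoin_singleton ℂ Q)
    obtain ⟨r, rfl⟩ := StarSubalgebra.mem_bot.1 hQm
    -- A traceless scalar matrix is zero, which does not square to `1`.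
    have hr : r = 0 := by
      simpa [Algebra.algebraMap_eq_smul_one, Matrix.trace_smul] using hQt
    simp [hr] at hQ2
  · rw [hS, ← Finset.sum_coe_sort, Matrix.sum_apply, Matrix.sum_apply, Finset.sum_mul,
      Finset.sum_mul, ← Finset.sum_add_distrib]
    refine Finset.sum_congr rfl fun β _ => ?_
    rw [hxy β]
    simp only [Matrix.add_apply, Matrix.smul_apply, smul_eq_mul]
    ring

/-- The second-qubit version of the decomposition, by exchanging the two qubits. -/
theorem IsInducedSecond.exists_decomp {n : Type*} [Fintype n]
    {S : Matrix (Fin 2 × Fin 2 × n) (Fin 2 × Fin 2 × n) ℂ} {Q : Matrix (Fin 2) (Fin 2) ℂ}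
    (hQ : Qᴴ = Q) (hQ2 : Q * Q = 1) (hQt : Q.trace = 0)
    (h : IsInducedSecond S (StarAlgebra.adjoin ℂ {Q})) :
    ∃ u v : Matrix (Fin 2 × n) (Fin 2 × n) ℂ, v ≠ 0 ∧ ∀ i i' j j' k k',
      S (i, j, k) (i', j', k') =
        u (i, k) (i', k') * (1 : Matrix (Fin 2) (Fin 2) ℂ) j j' + v (i, k) (i', k') * Q j j' := by
  obtain ⟨s, b, f, hS, hli, hA⟩ := h
  obtain ⟨u, v, hv, huv⟩ := IsInducedFirst.exists_decomp
    (S := fun x y => S (x.2.1, x.1, x.2.2) (y.2.1, y.1, y.2.2)) hQ hQ2 hQt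
    ⟨s, b, f, fun i i' j j' k k' => hS j j' i i' k k', hli, hA⟩
  exact ⟨u, v, hv, fun i i' j j' k l => huv j j' i i' k l⟩

/-! ### Slices of `S` and `P` and their commutation -/

/-- Entrywise form of the commutation relation when `S` is diagonal in both qubits. -/
theorem diag_comm {n₃ n₄ : Type*} [Fintype n₃] [Fintype n₄] [DecidableEq n₃] [DecidableEq n₄]
    {S : Matrix (Fin 2 × Fin 2 × n₃) (Fin 2 × Fin 2 × n₃) ℂ}
    {P : Matrix (Fin 2 × Fin 2 × n₄) (Fin 2 × Fin 2 × n₄) ℂ}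
    (hcomm : embS (n₄ := n₄) S * embP (n₃ := n₃) P
      = embP (n₃ := n₃) P * embS (n₄ := n₄) S)
    (h1 : ∀ i i' j j' k k', i ≠ i' → S (i, j, k) (i', j', k') = 0)
    (h2 : ∀ i i' j j' k k', j ≠ j' → S (i, j, k) (i', j', k') = 0)
    (i i' j j' : Fin 2) (k k' : n₃) (l l' : n₄) :
    (S (i, j, k) (i, j, k') - S (i', j', k) (i', j', k')) * P (i, j, l) (i', j', l') = 0 := by
  have h := congrFun (congrFun hcomm (i, j, k, l)) (i', j', k', l')
  simp only [Matrix.mul_apply, embS, embP, Fintype.sum_prod_type] at h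
  rw [Finset.sum_eq_single i (fun b _ hb => by simp [h1 _ _ _ _ _ _ hb.symm]) (by simp),
    Finset.sum_eq_single j (fun b _ hb => by simp [h2 _ _ _ _ _ _ hb.symm]) (by simp),
    Finset.sum_eq_single k' (fun b _ hb => by simp [hb]) (by simp),
    Finset.sum_eq_single l (fun b _ hb => by simp [hb.symm]) (by simp),
    Finset.sum_eq_single i' (fun b _ hb => by simp [h1 _ _ _ _ _ _ hb]) (by simp),
    Finset.sum_eq_single j' (fun b _ hb => by simp [h2 _ _ _ _ _ _ hb]) (by simp),
    Finset.sum_eq_single k (fun b _ hb => by simp [hb.symm]) (by simp),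
    Finset.sum_eq_single l' (fun b _ hb => by simp [hb]) (by simp)] at h
  simp only [if_true, mul_one] at h
  linear_combination h

/-- If an operator has its parts on the single qubits in the spans of `1, P₁` and of `1, P₂`, the
first one nontrivially, then its slices lie in
`⟨P₁⟩ ⊗ ⟨P₂⟩`, and `P₁` occurs in some of them. -/
theorem exists_two_qubit_coeffs {n : Type*} [Fintype n]
    {P : Matrix (Fin 2 × Fin 2 × n) (Fin 2 × Fin 2 × n) ℂ} {P₁ P₂ : Matrix (Fin 2) (Fin 2) ℂ}
    (hw₁ : P₁ 0 1 ≠ 0)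
    (h1 : ∃ u v : Matrix (Fin 2 × n) (Fin 2 × n) ℂ, v ≠ 0 ∧ ∀ i i' j j' k k',
      P (i, j, k) (i', j', k') =
        u (j, k) (j', k') * (1 : Matrix (Fin 2) (Fin 2) ℂ) i i' + v (j, k) (j', k') * P₁ i i')
    (h2 : ∃ u v : Matrix (Fin 2 × n) (Fin 2 × n) ℂ, ∀ i i' j j' k k',
      P (i, j, k) (i', j', k') =
        u (i, k) (i', k') * (1 : Matrix (Fin 2) (Fin 2) ℂ) j j' + v (i, k) (i', k') * P₂ j j') :
    ∃ a b c d : Matrix n n ℂ, (b ≠ 0 ∨ d ≠ 0) ∧ ∀ i i' j j' k k',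
      P (i, j, k) (i', j', k') =
        a k k' * (1 : Matrix (Fin 2) (Fin 2) ℂ) i i' * (1 : Matrix (Fin 2) (Fin 2) ℂ) j j'
        + b k k' * P₁ i i' * (1 : Matrix (Fin 2) (Fin 2) ℂ) j j'
        + c k k' * (1 : Matrix (Fin 2) (Fin 2) ℂ) i i' * P₂ j j'
        + d k k' * P₁ i i' * P₂ j j' := by
  obtain ⟨u₁, v₁, hv₁, h1⟩ := h1
  obtain ⟨u₂, v₂, h2⟩ := h2
  -- The `(0, 1)` entry in the first qubit isolates `v₁`, then the `(0, 0)` entry gives `u₁`.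
  have hv : ∀ j j' k k', v₁ (j, k) (j', k') =
      u₂ (0, k) (1, k') / P₁ 0 1 * (1 : Matrix (Fin 2) (Fin 2) ℂ) j j'
        + v₂ (0, k) (1, k') / P₁ 0 1 * P₂ j j' := by
    intro j j' k k'
    have h := (h1 0 1 j j' k k').symm.trans (h2 0 1 j j' k k')
    rw [Matrix.one_apply_ne (by decide : (0 : Fin 2) ≠ 1), mul_zero, zero_add] at h
    field_simp
    exact h
  have hu : ∀ j j' k k', u₁ (j, k) (j', k') =
      (u₂ (0, k) (0, k') - u₂ (0, k) (1, k') / P₁ 0 1 * P₁ 0 0)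
          * (1 : Matrix (Fin 2) (Fin 2) ℂ) j j'
        + (v₂ (0, k) (0, k') - v₂ (0, k) (1, k') / P₁ 0 1 * P₁ 0 0) * P₂ j j' := by
    intro j j' k k'
    have h := (h1 0 0 j j' k k').symm.trans (h2 0 0 j j' k k')
    rw [Matrix.one_apply_eq, mul_one, hv] at h
    linear_combination h
  have hP : ∀ i i' j j' k k', P (i, j, k) (i', j', k') =
      (u₂ (0, k) (0, k') - u₂ (0, k) (1, k') / P₁ 0 1 * P₁ 0 0)
        * (1 : Matrix (Fin 2) (Fin 2) ℂ) i i' * (1 : Matrix (Fin 2) (Fin 2) ℂ) j j'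
      + (u₂ (0, k) (1, k') / P₁ 0 1) * P₁ i i' * (1 : Matrix (Fin 2) (Fin 2) ℂ) j j'
      + (v₂ (0, k) (0, k') - v₂ (0, k) (1, k') / P₁ 0 1 * P₁ 0 0)
        * (1 : Matrix (Fin 2) (Fin 2) ℂ) i i' * P₂ j j'
      + (v₂ (0, k) (1, k') / P₁ 0 1) * P₁ i i' * P₂ j j' := by
    intro i i' j j' k k'
    rw [h1, hu, hv]
    ring
  refine ⟨fun k k' => u₂ (0, k) (0, k') - u₂ (0, k) (1, k') / P₁ 0 1 * P₁ 0 0,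
    fun k k' => u₂ (0, k) (1, k') / P₁ 0 1,
    fun k k' => v₂ (0, k) (0, k') - v₂ (0, k) (1, k') / P₁ 0 1 * P₁ 0 0,
    fun k k' => v₂ (0, k) (1, k') / P₁ 0 1, ?_, hP⟩
  · by_contra! hcon
    obtain ⟨hb, hd⟩ := hcon
    refine hv₁ ?_
    ext ⟨j, k⟩ ⟨j', k'⟩
    have hb' := congrFun (congrFun hb k) k'
    have hd' := congrFun (congrFun hd k) k'
    simp only [Matrix.zero_apply] at hb' hd' ⊢
    rw [hv, hb', hd']
    ring

/-! ### Consequences of the commutation relations -/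

/-- A Pauli operator that does not commute with `Z` has nonzero off-diagonal entries. -/
theorem pauli_entries {Q : Matrix (Fin 2) (Fin 2) ℂ} (hQ : Qᴴ = Q) (hQt : Q.trace = 0)
    (hQZ : Zm * Q ≠ Q * Zm) : Q 0 1 ≠ 0 ∧ Q 1 0 ≠ 0 ∧ Q 1 1 = -Q 0 0 := by
  have hst : star (Q 0 1) = Q 1 0 := by rw [← Matrix.conjTranspose_apply, hQ]
  have h01 : Q 0 1 ≠ 0 := by
    intro h
    refine hQZ ?_
    have h10 : Q 1 0 = 0 := by rw [← hst, h, star_zero]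
    ext i j
    fin_cases i <;> fin_cases j <;> simp [Zm, Matrix.mul_apply, h, h10]
  refine ⟨h01, by rw [← hst]; exact star_ne_zero.2 h01, ?_⟩
  rw [Matrix.trace_fin_two] at hQt
  linear_combination hQt

theorem anticomm_of_diag_zero {Q : Matrix (Fin 2) (Fin 2) ℂ} (h0 : Q 0 0 = 0) (h1 : Q 1 1 = 0) :
    Zm * Q = -(Q * Zm) := by
  ext i j
  fin_cases i <;> fin_cases j <;> simp [Zm, Matrix.mul_apply, h0, h1]

/-- The commutation relations with a diagonal `s` that distinguishes the basis states of each qubit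
leave only slices `a + d (P₁ ⊗ P₂)`, with `P₁` and `P₂` off-diagonal. -/
theorem slices_of_comm {n₃ n₄ : Type*} {s : Fin 2 → Fin 2 → n₃ → n₃ → ℂ}
    {P₁ P₂ : Matrix (Fin 2) (Fin 2) ℂ}
    (hw₁ : P₁ 0 1 ≠ 0 ∧ P₁ 1 0 ≠ 0 ∧ P₁ 1 1 = -P₁ 0 0)
    (hw₂ : P₂ 0 1 ≠ 0 ∧ P₂ 1 0 ≠ 0 ∧ P₂ 1 1 = -P₂ 0 0)
    (hs₁ : ∃ j k k', s 0 j k k' - s 1 j k k' ≠ 0) (hs₂ : ∃ i k k', s i 0 k k' - s i 1 k k' ≠ 0)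
    {a b c d : Matrix n₄ n₄ ℂ} (hbd : b ≠ 0 ∨ d ≠ 0)
    (hrel : ∀ i i' j j' k k' l l', (s i j k k' - s i' j' k k') *
      (a l l' * (1 : Matrix (Fin 2) (Fin 2) ℂ) i i' * (1 : Matrix (Fin 2) (Fin 2) ℂ) j j'
        + b l l' * P₁ i i' * (1 : Matrix (Fin 2) (Fin 2) ℂ) j j'
        + c l l' * (1 : Matrix (Fin 2) (Fin 2) ℂ) i i' * P₂ j j'
        + d l l' * P₁ i i' * P₂ j j') = 0) :
    P₁ 0 0 = 0 ∧ P₂ 0 0 = 0 ∧ b = 0 ∧ c = 0 ∧ d ≠ 0 := by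
  obtain ⟨hw₁, -, hz₁⟩ := hw₁
  obtain ⟨hw₂, hw₂', hz₂⟩ := hw₂
  have h01 : (1 : Matrix (Fin 2) (Fin 2) ℂ) 0 1 = 0 := Matrix.one_apply_ne (by decide)
  have h10 : (1 : Matrix (Fin 2) (Fin 2) ℂ) 1 0 = 0 := Matrix.one_apply_ne (by decide)
  have h1 (i : Fin 2) : (1 : Matrix (Fin 2) (Fin 2) ℂ) i i = 1 := Matrix.one_apply_eq i
  -- Flips of the first qubit, of the second qubit, and of both.
  have f1 (j k k' l l') : s 0 j k k' - s 1 j k k' = 0 ∨ b l l' + d l l' * P₂ j j = 0 := by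
    have h := hrel 0 1 j j k k' l l'
    rw [h01, h1] at h
    have h' : (s 0 j k k' - s 1 j k k') * (b l l' + d l l' * P₂ j j) * P₁ 0 1 = 0 := by
      linear_combination h
    exact mul_eq_zero.1 ((mul_eq_zero.1 h').resolve_right hw₁)
  have f2 (i k k' l l') : s i 0 k k' - s i 1 k k' = 0 ∨ c l l' + d l l' * P₁ i i = 0 := by
    have h := hrel i i 0 1 k k' l l'
    rw [h01, h1] at h
    have h' : (s i 0 k k' - s i 1 k k') * (c l l' + d l l' * P₁ i i) * P₂ 0 1 = 0 := by
      linear_combination h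
    exact mul_eq_zero.1 ((mul_eq_zero.1 h').resolve_right hw₂)
  have f3 (k k' l l') : s 0 0 k k' - s 1 1 k k' = 0 ∨ d l l' = 0 := by
    have h := hrel 0 1 0 1 k k' l l'
    rw [h01] at h
    have h' : (s 0 0 k k' - s 1 1 k k') * d l l' * (P₁ 0 1 * P₂ 0 1) = 0 := by
      linear_combination h
    exact mul_eq_zero.1 ((mul_eq_zero.1 h').resolve_right (mul_ne_zero hw₁ hw₂))
  have f4 (k k' l l') : s 0 1 k k' - s 1 0 k k' = 0 ∨ d l l' = 0 := by
    have h := hrel 0 1 1 0 k k' l l'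
    rw [h01, h10] at h
    have h' : (s 0 1 k k' - s 1 0 k k') * d l l' * (P₁ 0 1 * P₂ 1 0) = 0 := by
      linear_combination h
    exact mul_eq_zero.1 ((mul_eq_zero.1 h').resolve_right (mul_ne_zero hw₁ hw₂'))
  obtain ⟨j₀, p, p', hp⟩ := hs₁
  obtain ⟨i₀, q, q', hq⟩ := hs₂
  have hd : d ≠ 0 := by
    intro hd
    refine hbd.elim (fun hb => hb ?_) (fun h => h hd)
    ext l l'
    simpa [hd] using (f1 j₀ p p' l l').resolve_left hp
  obtain ⟨l₀, l₀', hd₀⟩ : ∃ l l', d l l' ≠ 0 := by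
    by_contra! h
    exact hd (by ext l l'; exact h l l')
  have e1 (k k') := (f3 k k' l₀ l₀').resolve_right hd₀
  have e2 (k k') := (f4 k k' l₀ l₀').resolve_right hd₀
  -- Since `s 0 0 = s 1 1` and `s 0 1 = s 1 0`, all single-qubit flips see the same nonzero
  -- difference.
  have g1 : ∀ j, s 0 j p p' - s 1 j p p' ≠ 0 := by
    intro j hj
    apply hp
    fin_cases j <;> fin_cases j₀ <;>
      first
        | exact hj
        | (simp only [Fin.zero_eta, Fin.mk_one] at hj ⊢
           linear_combination -hj + e1 p p' + e2 p p')
  have g2 : ∀ i, s i 0 q q' - s i 1 q q' ≠ 0 := by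
    intro i hi
    apply hq
    fin_cases i <;> fin_cases i₀ <;>
      first
        | exact hi
        | (simp only [Fin.zero_eta, Fin.mk_one] at hi ⊢
           linear_combination -hi + e1 q q' - e2 q q')
  have k1 (j l l') := (f1 j p p' l l').resolve_left (g1 j)
  have k2 (i l l') := (f2 i q q' l l').resolve_left (g2 i)
  refine ⟨?_, ?_, ?_, ?_, hd⟩
  · refine (mul_eq_zero.1 (?_ : d l₀ l₀' * P₁ 0 0 = 0)).resolve_left hd₀
    linear_combination (k2 0 l₀ l₀' - k2 1 l₀ l₀') / 2 + d l₀ l₀' / 2 * hz₁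
  · refine (mul_eq_zero.1 (?_ : d l₀ l₀' * P₂ 0 0 = 0)).resolve_left hd₀
    linear_combination (k1 0 l₀ l₀' - k1 1 l₀ l₀') / 2 + d l₀ l₀' / 2 * hz₂
  · ext l l'
    rw [Matrix.zero_apply]
    linear_combination (k1 0 l l' + k1 1 l l') / 2 - d l l' / 2 * hz₂
  · ext l l'
    rw [Matrix.zero_apply]
    linear_combination (k2 0 l l' + k2 1 l l') / 2 - d l l' / 2 * hz₁

/-! ### The induced algebra of the pair -/

/-- If all slices of `P` are combinations of `1` and an operator `K` with one vanishing diagonal and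
one nonvanishing off-diagonal entry, and `K` really occurs, then every induced pair algebra
is generated by `K`. -/
theorem pair_eq_adjoin {n : Type*} [Fintype n]
    {P : Matrix (Fin 2 × Fin 2 × n) (Fin 2 × Fin 2 × n) ℂ}
    {K : Matrix (Fin 2 × Fin 2) (Fin 2 × Fin 2) ℂ} {x₀ y₀ : Fin 2 × Fin 2} (hxy : x₀ ≠ y₀)
    (hK₀ : K x₀ x₀ = 0) (hK : K x₀ y₀ ≠ 0) {a d : Matrix n n ℂ} (hd : d ≠ 0)
    (hP : ∀ i i' j j' k k', P (i, j, k) (i', j', k') =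
      a k k' * (1 : Matrix (Fin 2 × Fin 2) (Fin 2 × Fin 2) ℂ) (i, j) (i', j')
        + d k k' * K (i, j) (i', j'))
    {A : StarSubalgebra ℂ (Matrix (Fin 2 × Fin 2) (Fin 2 × Fin 2) ℂ)} (hA : IsInducedPair P A) :
    A = StarAlgebra.adjoin ℂ {K} := by
  obtain ⟨s, g, c, hS, hli, rfl⟩ := hA
  have hsum : ∀ x y k k', ∑ α : s, g α x y * c α k k' =
      a k k' * (1 : Matrix (Fin 2 × Fin 2) (Fin 2 × Fin 2) ℂ) x y + d k k' * K x y := by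
    rintro ⟨i, j⟩ ⟨i', j'⟩ k k'
    rw [← hP, hS]
    have h := Finset.sum_coe_sort s fun α => g α (i, j) (i', j') * c α k k'
    exact h
  -- The coefficients of `1` and `K` can be read off from the entries `(x₀, x₀)` and `(x₀, y₀)`.
  have hg : ∀ α : s, g α = g α x₀ x₀ • 1 + (g α x₀ y₀ / K x₀ y₀) • K := by
    intro α
    ext x y
    have h := Fintype.linearIndependent_iff.1 hli
      (fun α => g α x y - (g α x₀ x₀ * (1 : Matrix (Fin 2 × Fin 2) (Fin 2 × Fin 2) ℂ) x y
        + g α x₀ y₀ / K x₀ y₀ * K x y)) ?_ α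
    · simpa using sub_eq_zero.1 h
    · ext k k'
      have e : ∀ β : s, (g β x y - (g β x₀ x₀ *
            (1 : Matrix (Fin 2 × Fin 2) (Fin 2 × Fin 2) ℂ) x y
            + g β x₀ y₀ / K x₀ y₀ * K x y)) * c β k k' =
          g β x y * c β k k'
          - g β x₀ x₀ * c β k k' * (1 : Matrix (Fin 2 × Fin 2) (Fin 2 × Fin 2) ℂ) x y
          - g β x₀ y₀ * c β k k' * (K x y / K x₀ y₀) := fun β => by ring
      simp only [Matrix.sum_apply, Matrix.smul_apply, smul_eq_mul, Matrix.zero_apply, e,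
        Finset.sum_sub_distrib, ← Finset.sum_mul, hsum, hK₀, Matrix.one_apply_eq,
        Matrix.one_apply_ne hxy]
      field_simp
      ring
  apply le_antisymm
  · rw [StarAlgebra.adjoin_le_iff]
    rintro _ ⟨α, hα, rfl⟩
    rw [SetLike.mem_coe, hg ⟨α, hα⟩]
    have hKm := StarAlgebra.self_mem_adjoin_singleton ℂ K
    exact add_mem (SMulMemClass.smul_mem _ (one_mem _)) (SMulMemClass.smul_mem _ hKm)
  · obtain ⟨α, hα⟩ : ∃ α : s, g α x₀ y₀ ≠ 0 := by
      by_contra! h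
      refine hd ?_
      ext k k'
      have h' := hsum x₀ y₀ k k'
      simp only [h, zero_mul, Finset.sum_const_zero, Matrix.one_apply_ne hxy, mul_zero,
        zero_add] at h'
      exact (mul_eq_zero.1 h'.symm).resolve_right hK
    rw [StarAlgebra.adjoin_le_iff, Set.singleton_subset_iff, SetLike.mem_coe]
    have hgm : g α ∈ StarAlgebra.adjoin ℂ (g '' (s : Set ℕ)) :=
      StarAlgebra.subset_adjoin ℂ _ ⟨α, α.2, rfl⟩
    have hKeq : K = (K x₀ y₀ / g α x₀ y₀) • (g α - g α x₀ x₀ • 1) := by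
      have : g α - g α x₀ x₀ • 1 = (g α x₀ y₀ / K x₀ y₀) • K :=
        sub_eq_iff_eq_add'.2 (hg α)
      rw [this, smul_smul, div_mul_div_cancel₀ hα, div_self hK, one_smul]
    rw [hKeq]
    exact SMulMemClass.smul_mem _ (sub_mem hgm (SMulMemClass.smul_mem _ (one_mem _)))

/-- If `S` induces `⟨Z⟩` on each of the two qubits and `P`
induces `⟨P₁⟩` and `⟨P₂⟩` on the two qubits for Pauli operators `P₁, P₂` not
commuting with `Z`, then `P₁` and `P₂` anticommute with `Z` and `P` induces
`⟨P₁ ⊗ₖ P₂⟩` on the pair of qubits. -/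
theorem induced_pair_eq_P1P2
    {n₃ n₄ : Type*} [Fintype n₃] [Fintype n₄]
    [DecidableEq n₃] [DecidableEq n₄] [Nonempty n₃] [Nonempty n₄]
    (S : Matrix (Fin 2 × Fin 2 × n₃) (Fin 2 × Fin 2 × n₃) ℂ)
    (P : Matrix (Fin 2 × Fin 2 × n₄) (Fin 2 × Fin 2 × n₄) ℂ)
    (hcomm : embS (n₄ := n₄) S * embP (n₃ := n₃) P
      = embP (n₃ := n₃) P * embS (n₄ := n₄) S)
    (hS1 : IsInducedFirst S (StarAlgebra.adjoin ℂ {Zm}))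
    (hS2 : IsInducedSecond S (StarAlgebra.adjoin ℂ {Zm}))
    (P₁ P₂ : Matrix (Fin 2) (Fin 2) ℂ)
    (hP₁h : P₁ᴴ = P₁) (hP₁u : P₁ᴴ * P₁ = 1) (hP₁t : Matrix.trace P₁ = 0)
    (hP₁Z : Zm * P₁ ≠ P₁ * Zm)
    (hP₂h : P₂ᴴ = P₂) (hP₂u : P₂ᴴ * P₂ = 1) (hP₂t : Matrix.trace P₂ = 0)
    (hP₂Z : Zm * P₂ ≠ P₂ * Zm)
    (hP1 : IsInducedFirst P (StarAlgebra.adjoin ℂ {P₁}))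
    (hP2 : IsInducedSecond P (StarAlgebra.adjoin ℂ {P₂})) :
    Zm * P₁ = -(P₁ * Zm) ∧ Zm * P₂ = -(P₂ * Zm) ∧
      (∀ A₁₂, IsInducedPair P A₁₂ → A₁₂ = StarAlgebra.adjoin ℂ {P₁ ⊗ₖ P₂}) := by
  have hZh : Zmᴴ = Zm := by
    ext i j
    fin_cases i <;> fin_cases j <;> simp [Zm]
  have hZ2 : Zm * Zm = 1 := by
    ext i j
    fin_cases i <;> fin_cases j <;> simp [Zm]
  have hZt : Zm.trace = 0 := by simp [Zm, Matrix.trace_fin_two]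
  have hZoff : ∀ i i' : Fin 2, i ≠ i' → Zm i i' = 0 := by
    intro i i' h
    fin_cases i <;> fin_cases i' <;> simp_all [Zm]
  have hZ0 : Zm 0 0 = 1 := by simp [Zm]
  have hZ1 : Zm 1 1 = -1 := by simp [Zm]
  have hw₁ := pauli_entries hP₁h hP₁t hP₁Z
  have hw₂ := pauli_entries hP₂h hP₂t hP₂Z
  obtain ⟨p, q, -, hpq⟩ := hP2.exists_decomp hP₂h (by rwa [hP₂h] at hP₂u) hP₂t
  obtain ⟨a, b, c, d, hbd, hP⟩ := exists_two_qubit_coeffs hw₁.1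
    (hP1.exists_decomp hP₁h (by rwa [hP₁h] at hP₁u) hP₁t) ⟨p, q, hpq⟩
  obtain ⟨u₁, v₁, hv₁, h1⟩ := hS1.exists_decomp hZh hZ2 hZt
  obtain ⟨u₂, v₂, hv₂, h2⟩ := hS2.exists_decomp hZh hZ2 hZt
  have o1 : ∀ i i' j j' k k', i ≠ i' → S (i, j, k) (i', j', k') = 0 := by
    intro i i' j j' k k' h
    rw [h1, hZoff _ _ h, Matrix.one_apply_ne h, mul_zero, mul_zero, add_zero]
  have o2 : ∀ i i' j j' k k', j ≠ j' → S (i, j, k) (i', j', k') = 0 := by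
    intro i i' j j' k k' h
    rw [h2, hZoff _ _ h, Matrix.one_apply_ne h, mul_zero, mul_zero, add_zero]
  have hs₁ : ∃ j k k', S (0, j, k) (0, j, k') - S (1, j, k) (1, j, k') ≠ 0 := by
    by_contra! hcon
    refine hv₁ ?_
    ext ⟨j, k⟩ ⟨j', k'⟩
    have h : S (0, j, k) (0, j', k') - S (1, j, k) (1, j', k') = 0 := by
      by_cases hj : j = j'
      · rw [← hj, hcon]
      · rw [o2 _ _ _ _ _ _ hj, o2 _ _ _ _ _ _ hj, sub_zero]
    rw [h1, h1, hZ0, hZ1, Matrix.one_apply_eq, Matrix.one_apply_eq] at h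
    rw [Matrix.zero_apply]
    linear_combination h / 2
  have hs₂ : ∃ i k k', S (i, 0, k) (i, 0, k') - S (i, 1, k) (i, 1, k') ≠ 0 := by
    by_contra! hcon
    refine hv₂ ?_
    ext ⟨i, k⟩ ⟨i', k'⟩
    have h : S (i, 0, k) (i', 0, k') - S (i, 1, k) (i', 1, k') = 0 := by
      by_cases hi : i = i'
      · rw [← hi, hcon]
      · rw [o1 _ _ _ _ _ _ hi, o1 _ _ _ _ _ _ hi, sub_zero]
    rw [h2, h2, hZ0, hZ1, Matrix.one_apply_eq, Matrix.one_apply_eq] at h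
    rw [Matrix.zero_apply]
    linear_combination h / 2
  obtain ⟨hz₁, hz₂, rfl, rfl, hd⟩ := slices_of_comm
    (s := fun i j k k' => S (i, j, k) (i, j, k')) (a := a) (c := c) hw₁ hw₂ hs₁ hs₂ hbd
    (fun i i' j j' k k' l l' => by
      rw [← hP]
      exact diag_comm hcomm o1 o2 i i' j j' k k' l l')
  refine ⟨anticomm_of_diag_zero hz₁ (by rw [hw₁.2.2, hz₁, neg_zero]),
    anticomm_of_diag_zero hz₂ (by rw [hw₂.2.2, hz₂, neg_zero]), fun A hA => ?_⟩
  refine pair_eq_adjoin (a := a) (x₀ := (0, 0)) (y₀ := (1, 1)) (by decide) ?_ ?_ hd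
    (fun i i' j j' k k' => ?_) hA
  · simp [Matrix.kroneckerMap_apply, hz₁]
  · exact mul_ne_zero hw₁.1 hw₂.1
  · rw [hP, ← Matrix.one_kronecker_one, Matrix.kroneckerMap_apply, Matrix.kroneckerMap_apply]
    simp only [Matrix.zero_apply]
    ring
end

section
/- Let A be a star subalgebra of Matrix (Fin 2 × Fin 2) (Fin 2 × Fin 2) ℂ such that every element of A lies in Submodule.span ℂ {1, Z ⊗ₖ 1, 1 ⊗ₖ Z, Z ⊗ₖ Z}. Suppose Z ⊗ₖ 1 ∉ A, 1 ⊗ₖ Z ∉ A, Z ⊗ₖ Z ∉ A, and A contains some element that is not a scalar multiple of the identity. Then there exist real numbers u, v, w, all nonzero, with u² = v² and v² = w², such that (u : ℂ) • (Z ⊗ₖ 1) + (v : ℂ) • (1 ⊗ₖ Z) + (w : ℂ) • (Z ⊗ₖ Z) ∈ A. -/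
/-!
All matrices involved are diagonal, so `A` is an algebra of functions on the four points of
`Fin 2 × Fin 2`. A subalgebra of functions on a finite set contains the indicator of every level
set of each of its members (Lagrange interpolation, `indicator_level_mem`). A nonconstant function
has two disjoint nonempty level sets, so one of them has one or two points
(`exists_small_level`). The indicator of a two-point set is `(1 ± D) / 2` with `D` one of `Z ⊗ 1`,
`1 ⊗ Z`, `Z ⊗ Z`, which the hypotheses exclude. The indicator of a single point is
`(1 ± Z ⊗ 1 ± 1 ⊗ Z ± Z ⊗ Z) / 4`, which gives the required element with `u, v, w = ±1`.
-/

open Matrix Kronecker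

/-- The diagonal of `Z`: the nontrivial character of `Fin 2`, with values `1, -1`. It is real-valued
so that its values can serve as the coefficients `u, v, w`. -/
def sgn : Fin 2 → ℝ := ![1, -1]

lemma Zm_eq_diagonal : Zm = diagonal (fun k => (sgn k : ℂ)) := by
  ext i j
  fin_cases i <;> fin_cases j <;> simp [Zm, sgn]

lemma Z_kron_one : Zm ⊗ₖ (1 : Matrix (Fin 2) (Fin 2) ℂ) =
    diagonal (fun k : Fin 2 × Fin 2 => (sgn k.1 : ℂ)) := by
  rw [Zm_eq_diagonal, ← diagonal_one, diagonal_kronecker_diagonal]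
  simp

lemma one_kron_Z : (1 : Matrix (Fin 2) (Fin 2) ℂ) ⊗ₖ Zm =
    diagonal (fun k : Fin 2 × Fin 2 => (sgn k.2 : ℂ)) := by
  rw [Zm_eq_diagonal, ← diagonal_one, diagonal_kronecker_diagonal]
  simp

lemma Z_kron_Z : Zm ⊗ₖ Zm =
    diagonal (fun k : Fin 2 × Fin 2 => (sgn k.1 * sgn k.2 : ℂ)) := by
  rw [Zm_eq_diagonal, diagonal_kronecker_diagonal]

/-- Interpolating the indicator of the value `c` on the finite range of `f` gives a polynomial in
`f` equal to the indicator of the level set of `c`. -/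
lemma indicator_level_mem {ι : Type*} [Fintype ι] (B : Subalgebra ℂ (ι → ℂ)) {f : ι → ℂ}
    (hf : f ∈ B) (c : ℂ) : (fun k => if f k = c then (1 : ℂ) else 0) ∈ B := by
  classical
  let p := Lagrange.interpolate (Finset.univ.image f) id (fun z => if z = c then (1 : ℂ) else 0)
  have hp : Polynomial.aeval f p = fun k => if f k = c then (1 : ℂ) else 0 := by
    funext k
    have hk : f k ∈ Finset.univ.image f := Finset.mem_image_of_mem f (Finset.mem_univ k)
    have h := Lagrange.eval_interpolate_at_node (fun z => if z = c then (1 : ℂ) else 0)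
      (Function.injective_id.injOn) hk
    rw [Polynomial.aeval_fn_apply, Polynomial.coe_aeval_eq_eval]
    exact h
  rw [← hp]
  exact (Algebra.adjoin_le (Set.singleton_subset_iff.2 hf) : _ ≤ B)
    (Polynomial.aeval_mem_adjoin_singleton ℂ f)

lemma exists_small_level {f : Fin 2 × Fin 2 → ℂ} {i j : Fin 2 × Fin 2} (hij : f i ≠ f j) :
    ∃ c, (Finset.univ.filter (fun k => f k = c)).card = 1 ∨
      (Finset.univ.filter (fun k => f k = c)).card = 2 := by
  have pos : ∀ l, 0 < (Finset.univ.filter (fun k => f k = f l)).card := fun l =>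
    Finset.card_pos.2 ⟨l, by simp⟩
  have hdisj : Disjoint (Finset.univ.filter (fun k => f k = f i))
      (Finset.univ.filter (fun k => f k = f j)) := by
    rw [Finset.disjoint_filter]
    intro k _ h h'
    exact hij (h.symm.trans h')
  have hle := Finset.card_le_univ ((Finset.univ.filter (fun k => f k = f i)) ∪
      (Finset.univ.filter (fun k => f k = f j)))
  rw [Finset.card_union_of_disjoint hdisj] at hle
  have h4 : Fintype.card (Fin 2 × Fin 2) = 4 := by simp
  have hi := pos i
  have hj := pos j
  by_cases h : (Finset.univ.filter (fun k => f k = f i)).card ≤ 2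
  · exact ⟨f i, by omega⟩
  · exact ⟨f j, by omega⟩

/-- With `χ` the indicator of a two-point set, `2χ - 1` is, up to sign, one of the three
nontrivial characters of `Fin 2 × Fin 2`. -/
lemma character_mem_of_pair (B : Subalgebra ℂ (Fin 2 × Fin 2 → ℂ)) {p q : Fin 2 × Fin 2}
    (hpq : p ≠ q) (h : (fun k => if k = p ∨ k = q then (1 : ℂ) else 0) ∈ B) :
    (fun k => (sgn k.1 : ℂ)) ∈ B ∨ (fun k => (sgn k.2 : ℂ)) ∈ B ∨
      (fun k => (sgn k.1 * sgn k.2 : ℂ)) ∈ B := by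
  -- The sign `ε` is the value at `p` of the character that agrees at `p` and `q`.
  have key : ∀ ε : ℂ, ε • ((2 : ℂ) • (fun k => if k = p ∨ k = q then (1 : ℂ) else 0) - 1) ∈ B :=
    fun ε => B.smul_mem (B.sub_mem (B.smul_mem h 2) B.one_mem) ε
  obtain ⟨a, b⟩ := p
  obtain ⟨c, d⟩ := q
  by_cases hac : a = c
  · left
    subst hac
    convert key (sgn a) using 1
    funext ⟨k, l⟩
    fin_cases a <;> fin_cases b <;> fin_cases d <;> first | exact absurd rfl hpq | skip
    all_goals fin_cases k <;> fin_cases l <;> norm_num [sgn]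
  right
  by_cases hbd : b = d
  · left
    subst hbd
    convert key (sgn b) using 1
    funext ⟨k, l⟩
    fin_cases a <;> fin_cases b <;> fin_cases c <;> first | exact absurd rfl hpq | skip
    all_goals fin_cases k <;> fin_cases l <;> norm_num [sgn]
  · right
    convert key (sgn a * sgn b) using 1
    funext ⟨k, l⟩
    fin_cases a <;> fin_cases c <;> first | exact absurd rfl hac | skip
    all_goals fin_cases b <;> fin_cases d <;> first | exact absurd rfl hbd | skip
    all_goals fin_cases k <;> fin_cases l <;> norm_num [sgn]

/-- With `χ` the indicator of the point `p`, the function `4χ - 1` is the sum of the three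
nontrivial characters weighted by their values at `p` (orthogonality of characters). -/
lemma combination_mem_of_point (B : Subalgebra ℂ (Fin 2 × Fin 2 → ℂ)) {p : Fin 2 × Fin 2}
    (h : (fun k => if k = p then (1 : ℂ) else 0) ∈ B) :
    (fun k => (sgn p.1 * sgn k.1 + sgn p.2 * sgn k.2 +
      (sgn p.1 * sgn p.2) * (sgn k.1 * sgn k.2) : ℂ)) ∈ B := by
  convert B.sub_mem (B.smul_mem h (4 : ℂ)) B.one_mem using 1
  obtain ⟨a, b⟩ := p
  funext ⟨k, l⟩
  fin_cases a <;> fin_cases b <;> fin_cases k <;> fin_cases l <;> norm_num [sgn]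

lemma sgn_sq (a : Fin 2) : sgn a ^ 2 = 1 := by
  fin_cases a <;> simp [sgn]

lemma sgn_ne_zero (a : Fin 2) : sgn a ≠ 0 := by
  fin_cases a <;> simp [sgn]

/-- If a star subalgebra `A` of the two-qubit matrix algebra is
contained in `span{1, Z⊗1, 1⊗Z, Z⊗Z}`, contains none of `Z⊗1`, `1⊗Z`, `Z⊗Z`, but
contains a non-scalar element, then `A` contains an element
`u•(Z⊗1) + v•(1⊗Z) + w•(Z⊗Z)` with `u, v, w` real, all nonzero, and
`u² = v² = w²`. -/
theorem star_subalgebra_uvw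
    (A : StarSubalgebra ℂ (Matrix (Fin 2 × Fin 2) (Fin 2 × Fin 2) ℂ))
    (hspan : ∀ x ∈ A, x ∈ Submodule.span ℂ
      ({1, Zm ⊗ₖ (1 : Matrix (Fin 2) (Fin 2) ℂ), (1 : Matrix (Fin 2) (Fin 2) ℂ) ⊗ₖ Zm,
        Zm ⊗ₖ Zm} : Set (Matrix (Fin 2 × Fin 2) (Fin 2 × Fin 2) ℂ)))
    (h1 : Zm ⊗ₖ (1 : Matrix (Fin 2) (Fin 2) ℂ) ∉ A)
    (h2 : (1 : Matrix (Fin 2) (Fin 2) ℂ) ⊗ₖ Zm ∉ A)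
    (h3 : Zm ⊗ₖ Zm ∉ A)
    (h4 : ∃ x ∈ A, ∀ lam : ℂ, x ≠ lam • (1 : Matrix (Fin 2 × Fin 2) (Fin 2 × Fin 2) ℂ)) :
    ∃ u v w : ℝ, u ≠ 0 ∧ v ≠ 0 ∧ w ≠ 0 ∧ u ^ 2 = v ^ 2 ∧ v ^ 2 = w ^ 2 ∧
      (u : ℂ) • (Zm ⊗ₖ (1 : Matrix (Fin 2) (Fin 2) ℂ))
        + (v : ℂ) • ((1 : Matrix (Fin 2) (Fin 2) ℂ) ⊗ₖ Zm)
        + (w : ℂ) • (Zm ⊗ₖ Zm) ∈ A := by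
  -- `A`, read as an algebra of functions on the diagonal.
  let B : Subalgebra ℂ (Fin 2 × Fin 2 → ℂ) := A.toSubalgebra.comap (diagonalAlgHom ℂ)
  have hB : ∀ g, g ∈ B ↔ diagonal g ∈ A := fun g => Iff.rfl
  obtain ⟨x, hxA, hx⟩ := h4
  obtain ⟨f, rfl⟩ : ∃ f, diagonal f = x := by
    have hle : Submodule.span ℂ
        ({1, Zm ⊗ₖ (1 : Matrix (Fin 2) (Fin 2) ℂ), (1 : Matrix (Fin 2) (Fin 2) ℂ) ⊗ₖ Zm,
          Zm ⊗ₖ Zm} : Set (Matrix (Fin 2 × Fin 2) (Fin 2 × Fin 2) ℂ)) ≤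
        LinearMap.range (diagonalLinearMap (Fin 2 × Fin 2) ℂ ℂ) := by
      rw [Submodule.span_le]
      rintro y (rfl | rfl | rfl | rfl)
      · exact ⟨1, diagonal_one⟩
      · exact ⟨_, Z_kron_one.symm⟩
      · exact ⟨_, one_kron_Z.symm⟩
      · exact ⟨_, Z_kron_Z.symm⟩
    exact hle (hspan x hxA)
  obtain ⟨i, hi⟩ : ∃ i, f i ≠ f (0, 0) := by
    by_contra! hconst
    refine hx (f (0, 0)) ?_
    rw [smul_one_eq_diagonal]
    exact congrArg diagonal (funext hconst)
  obtain ⟨c, hc⟩ := exists_small_level hi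
  have hind := indicator_level_mem B ((hB f).2 hxA) c
  rcases hc with hc | hc
  · obtain ⟨p, hp⟩ := Finset.card_eq_one.1 hc
    have hiff : ∀ k, f k = c ↔ k = p := fun k => by simpa using Finset.ext_iff.1 hp k
    simp only [hiff] at hind
    refine ⟨sgn p.1, sgn p.2, sgn p.1 * sgn p.2, sgn_ne_zero _, sgn_ne_zero _,
      mul_ne_zero (sgn_ne_zero _) (sgn_ne_zero _), by simp only [sgn_sq],
      by simp only [mul_pow, sgn_sq, mul_one], ?_⟩
    rw [Z_kron_one, one_kron_Z, Z_kron_Z, ← diagonal_smul, ← diagonal_smul, ← diagonal_smul,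
      diagonal_add, diagonal_add, ← hB]
    convert combination_mem_of_point B hind using 1
    funext k
    simp
  · obtain ⟨p, q, hpq, hp⟩ := Finset.card_eq_two.1 hc
    have hiff : ∀ k, f k = c ↔ k = p ∨ k = q := fun k => by simpa using Finset.ext_iff.1 hp k
    simp only [hiff] at hind
    rw [Z_kron_one, ← hB] at h1
    rw [one_kron_Z, ← hB] at h2
    rw [Z_kron_Z, ← hB] at h3
    rcases character_mem_of_pair B hpq hind with h | h | h
    exacts [(h1 h).elim, (h2 h).elim, (h3 h).elim]
end

section
/- Fix a natural number r ≥ 2 and work in M := Matrix ((Fin (r+1)) → Fin 2) ((Fin (r+1)) → Fin 2) ℂ. For a set T ⊆ Fin (r+1), let Z_T ∈ M be the diagonal matrix whose (f, f) entry is ∏_{i ∈ T} (-1)^{(f i : ℕ)} (so Z_T is the Kronecker product placing the Pauli Z on the coordinates in T and the identity elsewhere; Z_∅ = 1). Then any matrix a ∈ M lying simultaneously in Submodule.span ℂ {Z_∅, Z_{{0}}, Z_{{0}ᶜ}, Z_{Set.univ}} and in Submodule.span ℂ {Z_∅, Z_{{Fin.last r}}, Z_{{Fin.last r}ᶜ},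 Z_{Set.univ}} lies in Submodule.span ℂ {Z_∅, Z_{Set.univ}}. (This is the linear-algebra core of the induction step showing that the algebra induced by a star term on a copath of r+1 interior qubits is ⟨Z^{⊗(r+1)}⟩.) -/
/-!
The diagonal of `ZT T` is the character `f ↦ ∏_{i ∈ T} (-1)^(f i)` of `(ℤ/2)^(r+1)`, and distinct
sets `T` give distinct, hence orthogonal, characters. Write
`a = α ZT ∅ + β ZT {0} + γ ZT {0}ᶜ + δ ZT univ`, and expand `a` likewise with `Fin.last r` for `0`.
For `r ≥ 2` the coordinates `0`, `1`, `Fin.last r` are distinct, and restricting to the configurations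
supported on these three coordinates (`ZT_probe`) still gives distinct characters for
`∅`, `univ`, `{0}`, `{0}ᶜ`, `{Fin.last r}` and `{Fin.last r}ᶜ`. Pairing the two expansions
of `a` with the characters of `{0}` and `{0}ᶜ` on the resulting eight entries therefore gives `β = γ = 0`.
-/

open scoped Classical

/-- The diagonal operator on `r+1` qubits acting as the Pauli `Z` on the
coordinates in `T` and as the identity elsewhere: its `(f, f)` diagonal entry is
`∏_{i ∈ T} (-1)^(f i)`. -/
noncomputable def ZT {r : ℕ} (T : Set (Fin (r + 1))) :
    Matrix ((Fin (r + 1)) → Fin 2) ((Fin (r + 1)) → Fin 2) ℂ :=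
  Matrix.diagonal fun f => ∏ i ∈ T.toFinset, (-1 : ℂ) ^ ((f i : ℕ))

/-- The configuration with values `x`, `y`, `z` at the coordinates `0`, `1`, `Fin.last r`, and `0`
elsewhere (for `r ≥ 2`, when these coordinates are distinct). -/
def probe (r : ℕ) (x y z : Fin 2) : Fin (r + 1) → Fin 2 := fun i =>
  if i = 0 then x else if i = 1 then y else if i = Fin.last r then z else 0

lemma ZT_probe {r : ℕ} (hr : 2 ≤ r) (T : Set (Fin (r + 1))) (x y z : Fin 2) :
    ZT T (probe r x y z) (probe r x y z) =
      (if 0 ∈ T then (-1 : ℂ) ^ (x : ℕ) else 1) * (if 1 ∈ T then (-1 : ℂ) ^ (y : ℕ) else 1) *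
        (if Fin.last r ∈ T then (-1 : ℂ) ^ (z : ℕ) else 1) := by
  obtain ⟨n, rfl⟩ : ∃ n, r = n + 2 := ⟨r - 2, by omega⟩
  have h10 : (1 : Fin (n + 2 + 1)) ≠ 0 := by simp
  have hl0 : Fin.last (n + 2) ≠ 0 := by simp [Fin.ext_iff]
  have hl1 : Fin.last (n + 2) ≠ 1 := by simp [Fin.ext_iff]
  -- Each factor splits as a product of three factors, one for each probed coordinate.
  have key : ∀ i, (-1 : ℂ) ^ ((probe (n + 2) x y z i : Fin 2) : ℕ) =
      (if i = 0 then (-1 : ℂ) ^ (x : ℕ) else 1) * (if i = 1 then (-1 : ℂ) ^ (y : ℕ) else 1) *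
        (if i = Fin.last (n + 2) then (-1 : ℂ) ^ (z : ℕ) else 1) := by
    intro i
    unfold probe
    by_cases h0 : i = 0
    · subst h0; simp [h10.symm, hl0.symm]
    by_cases h1 : i = 1
    · subst h1; simp [h10, hl1.symm]
    by_cases h2 : i = Fin.last (n + 2)
    · subst h2; simp [hl0, hl1]
    simp [h0, h1, h2]
  simp only [ZT, Matrix.diagonal_apply_eq, key, Finset.prod_mul_distrib, Finset.prod_ite_eq',
    Set.mem_toFinset]

/-- For `r ≥ 2`, any matrix lying both in
`span{I, Z⊗I^{⊗r}, I⊗Z^{⊗r}, Z^{⊗(r+1)}}` and in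
`span{I, I^{⊗r}⊗Z, Z^{⊗r}⊗I, Z^{⊗(r+1)}}` lies in `span{I, Z^{⊗(r+1)}}`. -/
theorem span_inter_eq_span_ZZ {r : ℕ} (hr : 2 ≤ r)
    (a : Matrix ((Fin (r + 1)) → Fin 2) ((Fin (r + 1)) → Fin 2) ℂ)
    (h₁ : a ∈ Submodule.span ℂ
      ({ZT (∅ : Set (Fin (r + 1))), ZT {0}, ZT ({0}ᶜ), ZT Set.univ} :
        Set (Matrix ((Fin (r + 1)) → Fin 2) ((Fin (r + 1)) → Fin 2) ℂ)))
    (h₂ : a ∈ Submodule.span ℂ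
      ({ZT (∅ : Set (Fin (r + 1))), ZT {Fin.last r}, ZT ({Fin.last r}ᶜ), ZT Set.univ} :
        Set (Matrix ((Fin (r + 1)) → Fin 2) ((Fin (r + 1)) → Fin 2) ℂ))) :
    a ∈ Submodule.span ℂ
      ({ZT (∅ : Set (Fin (r + 1))), ZT Set.univ} :
        Set (Matrix ((Fin (r + 1)) → Fin 2) ((Fin (r + 1)) → Fin 2) ℂ)) := by
  have h10 : (1 : Fin (r + 1)) ≠ 0 := by
    obtain ⟨n, rfl⟩ : ∃ n, r = n + 2 := ⟨r - 2, by omega⟩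
    simp
  have hl0 : Fin.last r ≠ 0 := by
    obtain ⟨n, rfl⟩ : ∃ n, r = n + 2 := ⟨r - 2, by omega⟩
    simp [Fin.ext_iff]
  have hl1 : Fin.last r ≠ 1 := by
    obtain ⟨n, rfl⟩ : ∃ n, r = n + 2 := ⟨r - 2, by omega⟩
    simp [Fin.ext_iff]
  simp only [Submodule.mem_span_insert, Submodule.mem_span_singleton] at h₁ h₂
  obtain ⟨α, _, ⟨β, _, ⟨γ, _, ⟨δ, rfl⟩, rfl⟩, rfl⟩, rfl⟩ := h₁
  obtain ⟨α', _, ⟨β', _, ⟨γ', _, ⟨δ', rfl⟩, rfl⟩, rfl⟩, h⟩ := h₂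
  have E (x y z : Fin 2) := congrFun (congrFun h (probe r x y z)) (probe r x y z)
  simp only [Matrix.add_apply, Matrix.smul_apply, ZT_probe hr, Set.mem_empty_iff_false,
    Set.mem_singleton_iff, Set.mem_compl_iff, Set.mem_univ, h10, hl0, hl0.symm, hl1.symm,
    if_true, if_false, not_true, not_false_iff, smul_eq_mul, one_mul, mul_one] at E
  have e000 := E 0 0 0
  have e001 := E 0 0 1
  have e010 := E 0 1 0
  have e011 := E 0 1 1
  have e100 := E 1 0 0
  have e101 := E 1 0 1
  have e110 := E 1 1 0
  have e111 := E 1 1 1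
  simp only [Fin.val_zero, Fin.val_one, pow_zero, pow_one] at e000 e001 e010 e011 e100 e101 e110 e111
  -- Orthogonality of characters: the weights are the values of the character of `{0}`.
  have hβ : β = 0 := by
    linear_combination (e000 + e001 + e010 + e011 - e100 - e101 - e110 - e111) / 8
  -- The weights are the values of the character of `{0}ᶜ`.
  have hγ : γ = 0 := by
    linear_combination (e000 - e001 - e010 + e011 + e100 - e101 - e110 + e111) / 8
  subst hβ hγ
  rw [Submodule.mem_span_pair]
  exact ⟨α, δ, by simp⟩
end
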